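/- Let V be a normal algebra of differential functions in ℓ < ∞ differential variables over a field of characteristic zero, and assume that the algebra of quasiconstants F ⊆ V is a linearly closed differential field with respect to the restriction of ∂, with subfield of constants C = {c ∈ F : ∂c = 0}. Let K(∂) = (K_{ij}(∂)) be an ℓ×ℓ matrix differential operator of order N with quasiconstant coefficients whose leading coefficient K_N = (K_{ij,N})_{i,j} ∈ Mat_{ℓ×ℓ}(F) is invertible. Then for every k ≥ 0 the cohomology of the generalized variational complex (Ω•(V), δ_K) satisfies dim_C H^k(Ω•(V), δ_K) = binom(Nℓ, k+1). -/

import Mathlib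

/-- The structure of an algebra of differential functions in `ℓ` differential variables
on a commutative ring `V`: a derivation `∂ = pd` and pairwise commuting derivations
`∂/∂u_i^{(n)} = D i n` such that each `f ∈ V` is annihilated by all but finitely many of
the `D i n`, and `[D i n, ∂] = D i (n−1)` (zero for `n = 0`). -/
structure IsAlgDiffFun {V : Type*} [CommRing V] {l : ℕ}
    (pd : V → V) (D : Fin l → ℕ → V → V) : Prop where
  pd_add : ∀ a b : V, pd (a + b) = pd a + pd b
  pd_leibniz : ∀ a b : V, pd (a * b) = pd a * b + a * pd b
  d_add : ∀ (i : Fin l) (n : ℕ) (a b : V), D i n (a + b) = D i n a + D i n b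
  d_leibniz : ∀ (i : Fin l) (n : ℕ) (a b : V), D i n (a * b) = D i n a * b + a * D i n b
  d_comm : ∀ (i : Fin l) (n : ℕ) (j : Fin l) (m : ℕ) (f : V),
    D i n (D j m f) = D j m (D i n f)
  d_fin : ∀ f : V, {p : Fin l × ℕ | D p.1 p.2 f ≠ 0}.Finite
  comm_zero : ∀ (i : Fin l) (f : V), D i 0 (pd f) = pd (D i 0 f)
  comm_succ : ∀ (i : Fin l) (n : ℕ) (f : V),
    D i (n + 1) (pd f) = pd (D i (n + 1) f) + D i n f

/-- Apply a map `f` to all the coefficients of a polynomial. -/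
noncomputable def coeffMap {V : Type*} [CommRing V] {k : ℕ} (f : V → V)
    (Q : MvPolynomial (Fin k) V) : MvPolynomial (Fin k) V :=
  ∑ m ∈ Q.support, (MvPolynomial.monomial m) (f (MvPolynomial.coeff m Q))

/-- The polynomial `(λ_α + ∂)^n K_{j,i'}(λ_α) = Σ_m Σ_{p=0}^n binom(n,p) (∂^p K_{j,i',m})
λ_α^{n−p+m}`, where `K_{j,i'}(∂) = Σ_{m=0}^N K_{j,i',m} ∂^m`. -/
noncomputable def kFactor {V : Type*} [CommRing V] {l : ℕ} (pd : V → V)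
    (N : ℕ) (Kc : Fin l → Fin l → ℕ → V) (n : ℕ) (j i' : Fin l) {k : ℕ} (α : Fin k) :
    MvPolynomial (Fin k) V :=
  ∑ m ∈ Finset.range (N + 1), ∑ p ∈ Finset.range (n + 1),
    (MvPolynomial.monomial (Finsupp.single α (n - p + m)))
      ((n.choose p : V) * pd^[p] (Kc j i' m))

/-- The map `δ_K : Ω̃^k(V) → Ω̃^{k+1}(V)`:
`(δ_K P)_{i_0,…,i_k}(λ_0,…,λ_k) = Σ_α (−1)^α Σ_j Σ_n
(∂ P_{i_0,…,î_α,…,i_k}(λ_0,…,λ̂_α,…,λ_k)/∂u_j^{(n)}) ((λ_α+∂)^n K_{j,i_α}(λ_α))`. -/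
noncomputable def deltaK {V : Type*} [CommRing V] {l : ℕ} (pd : V → V)
    (D : Fin l → ℕ → V → V) (N : ℕ) (Kc : Fin l → Fin l → ℕ → V) {k : ℕ}
    (P : (Fin k → Fin l) → MvPolynomial (Fin k) V) :
    (Fin (k + 1) → Fin l) → MvPolynomial (Fin (k + 1)) V :=
  fun i => ∑ α : Fin (k + 1), (-1 : ℤ) ^ (α : ℕ) •
    ∑ j : Fin l, ∑ᶠ n : ℕ,
      coeffMap (D j n) (MvPolynomial.rename α.succAbove (P (fun b => i (α.succAbove b))))
        * kFactor pd N Kc n j (i α) α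

/-- An array `P ∈ Ω̃^k(V)` is skewsymmetric if it is skewsymmetric with respect to
simultaneous permutations of the variables `λ_1,…,λ_k` and the indices `i_1,…,i_k`. -/
def OmegaSkew {V : Type*} [CommRing V] {l k : ℕ}
    (P : (Fin k → Fin l) → MvPolynomial (Fin k) V) : Prop :=
  ∀ (σ : Equiv.Perm (Fin k)) (i : Fin k → Fin l),
    MvPolynomial.rename σ (P (fun a => i (σ a))) = (Equiv.Perm.sign σ : ℤ) • P i

/-- The action of `∂` on `Ω̃^k(V)`:
`(∂P)_{i_1,…,i_k}(λ_1,…,λ_k) = (∂ + λ_1 + ⋯ + λ_k) P_{i_1,…,i_k}(λ_1,…,λ_k)` with `∂`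
applied to the coefficients. -/
noncomputable def bigD {V : Type*} [CommRing V] {l k : ℕ} (pd : V → V)
    (P : (Fin k → Fin l) → MvPolynomial (Fin k) V) :
    (Fin k → Fin l) → MvPolynomial (Fin k) V :=
  fun i => (∑ a : Fin k, MvPolynomial.X a) * P i + coeffMap pd (P i)

/-- Membership in the subspace `V_{m,i} = {f : ∂f/∂u_j^{(n)} = 0 whenever (n,j) > (m,i)
in the lexicographic order}`. -/
def memVmi {V : Type*} [CommRing V] {l : ℕ} (D : Fin l → ℕ → V → V) (m : ℕ) (i : Fin l) (f : V) : Prop :=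
  ∀ (n : ℕ) (j : Fin l), (m < n ∨ (m = n ∧ i < j)) → D j n f = 0

/-- An algebra of differential functions is normal if `∂/∂u_i^{(m)} (V_{m,i}) = V_{m,i}`
for all `m, i`. -/
def IsNormalADF {V : Type*} [CommRing V] {l : ℕ} (D : Fin l → ℕ → V → V) : Prop :=
  ∀ (m : ℕ) (i : Fin l) (f : V), memVmi D m i f → ∃ g, memVmi D m i g ∧ D i m g = f

namespace S19

open Equiv

/-- skew functions -/
def Sk {X V : Type*} [AddCommGroup V] {k : ℕ} (c : (Fin k → X) → V) : Prop :=
  ∀ (σ : Perm (Fin k)) (x : Fin k → X), c (x ∘ σ) = (Perm.sign σ : ℤ) • c x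

/-- antisymmetrization in the first argument -/
def exd {X V : Type*} [AddCommGroup V] {k : ℕ} (f : (Fin (k + 1) → X) → V) :
    (Fin (k + 1) → X) → V :=
  fun x => ∑ α : Fin (k + 1), (-1 : ℤ) ^ (α : ℕ) • f (x ∘ α.cycleRange.symm)

section
variable {X V : Type*} [AddCommGroup V] {k : ℕ}

theorem comp_cyc (x : Fin (k + 1) → X) (α : Fin (k + 1)) :
    x ∘ α.cycleRange.symm = Fin.cons (x α) (fun b => x (α.succAbove b)) := by
  funext b
  refine Fin.cases ?_ (fun b => ?_) b
  · simp
  · simp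

theorem sk_zero : Sk (fun _ : Fin k → X => (0 : V)) := fun σ x => by simp

theorem Sk.add {c d : (Fin k → X) → V} (hc : Sk c) (hd : Sk d) : Sk (c + d) := fun σ x => by
  simp [hc σ x, hd σ x]

theorem Sk.sub {c d : (Fin k → X) → V} (hc : Sk c) (hd : Sk d) : Sk (c - d) := fun σ x => by
  simp [hc σ x, hd σ x, smul_sub]

theorem sk_fix (f : (Fin (k + 1) → X) → V) (hf : ∀ x0, Sk (fun y : Fin k → X => f (Fin.cons x0 y)))
    (ρ : Perm (Fin (k + 1))) (h0 : ρ 0 = 0) (x : Fin (k + 1) → X) :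
    f (x ∘ ρ) = (Perm.sign ρ : ℤ) • f x := by
  obtain ⟨⟨p, e⟩, rfl⟩ := Perm.decomposeFin.symm.surjective ρ
  have hp : p = 0 := by simpa using h0
  subst hp
  have h1 : x ∘ (Perm.decomposeFin.symm (0, e)) = Fin.cons (x 0) ((Fin.tail x) ∘ e) := by
    funext b
    refine Fin.cases ?_ (fun b => ?_) b
    · simp
    · simp [Fin.tail]
  have h2 := hf (x 0) e (Fin.tail x)
  rw [h1]
  simp only [Fin.cons_self_tail] at h2
  rw [h2]
  simp

theorem exd_sk (f : (Fin (k + 1) → X) → V)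
    (hf : ∀ x0, Sk (fun y : Fin k → X => f (Fin.cons x0 y))) : Sk (exd f) := by
  intro τ x
  have hs : ∀ α : Fin (k+1), ((-1 : ℤ) ^ (α : ℕ)) = (Perm.sign (α.cycleRange.symm) : ℤ) := by
    intro α; simp [Perm.sign_symm, Fin.sign_cycleRange]
  unfold exd
  rw [Finset.smul_sum, ← Equiv.sum_comp τ (fun α => (Perm.sign τ : ℤ) • (-1 : ℤ) ^ (α : ℕ) • f (x ∘ α.cycleRange.symm))]
  refine Finset.sum_congr rfl fun α _ => ?_
  have h1 : (x ∘ τ) ∘ α.cycleRange.symm =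
    (x ∘ (τ α).cycleRange.symm) ∘ ((τ α).cycleRange * τ * α.cycleRange.symm : Perm _) := by
    funext b; simp
  rw [h1, sk_fix f hf _ (by simp), smul_smul, smul_smul, hs, hs]
  congr 1
  simp only [Perm.sign_mul, Perm.sign_symm]
  push_cast
  have : ∀ u : ℤˣ, (u : ℤ) * u = 1 := fun u => by rcases Int.units_eq_one_or u with rfl | rfl <;> simp
  have ha := this (Perm.sign α.cycleRange)
  linear_combination ((Perm.sign (τ α).cycleRange : ℤ) * Perm.sign τ) * ha

theorem exd_exd (D : X → V → V) (hD : ∀ x a b, D x (a + b) = D x a + D x b)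
    (hc : ∀ x y a, D x (D y a) = D y (D x a)) (c : (Fin k → X) → V) :
    exd (fun x => D (x 0) (exd (fun y : Fin (k + 1) → X => D (y 0) (c (Fin.tail y))) (Fin.tail x))) = 0 := by
  let D' : X → V →+ V := fun x => AddMonoidHom.mk' (D x) (hD x)
  have hD' : ∀ x v, D x v = D' x v := fun _ _ => rfl
  funext v
  simp only [exd, Function.comp_apply, Fin.cycleRange_symm_zero, hD', map_sum, map_zsmul, Finset.smul_sum]
  rw [Fin.sum_sum_eq_sum_triangle_add]
  simp only [Pi.zero_apply]
  refine Finset.sum_eq_zero fun i _ => Finset.sum_eq_zero fun j hj => ?_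
  rw [Finset.mem_Ici] at hj
  have e : ∀ (α : Fin (k+2)), Fin.tail (v ∘ α.cycleRange.symm) = α.removeNth v := by
    intro α; rw [comp_cyc]; rfl
  have e' : ∀ (u : Fin (k+1) → X) (α : Fin (k+1)), Fin.tail (u ∘ α.cycleRange.symm) = α.removeNth u := by
    intro u α; rw [comp_cyc]; rfl
  simp only [e, e']
  have H₁ : i.castSucc.removeNth v j = v j.succ := by
    simp [Fin.removeNth_apply, Fin.succAbove_of_le_castSucc, hj]
  have H₂ : j.succ.removeNth v i = v i.castSucc := by
    simp [Fin.removeNth_apply, Fin.succAbove_of_castSucc_lt, hj]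
  have H3 : i.removeNth (j.succ.removeNth v) = j.removeNth (i.castSucc.removeNth v) := by
    rw [Fin.removeNth_removeNth_eq_swap]
    simp [Fin.predAbove, hj, Fin.succAbove]
  rw [H₁, H₂, H3, ← hD', ← hD', ← hD', ← hD', hc (v j.succ)]
  simp only [Fin.val_castSucc, Fin.val_succ, pow_succ, mul_neg, mul_one, neg_smul]
  rw [smul_comm, ← sub_eq_add_neg, sub_self]

end
end S19


namespace S19

open Equiv

/-- full antisymmetrization -/
noncomputable def asym {X V : Type*} [AddCommGroup V] [Module ℚ V] {k : ℕ} (s : (Fin k → X) → V) :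
    (Fin k → X) → V :=
  fun x => ((k.factorial : ℚ)⁻¹) • ∑ σ : Perm (Fin k), (Perm.sign σ : ℤ) • s (x ∘ σ)

section
variable {X V : Type*} [AddCommGroup V] [Module ℚ V] {k : ℕ}

theorem sign_sq (u : ℤˣ) : (u : ℤ) * u = 1 := by
  rcases Int.units_eq_one_or u with rfl | rfl <;> simp

theorem asym_sk (s : (Fin k → X) → V) : Sk (asym s) := by
  intro τ x
  unfold asym
  rw [smul_comm]
  congr 1
  rw [Finset.smul_sum, ← Equiv.sum_comp (Equiv.mulLeft τ)
    (fun σ => (Perm.sign τ : ℤ) • (Perm.sign σ : ℤ) • s (x ∘ σ))]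
  refine Finset.sum_congr rfl fun σ _ => ?_
  rw [smul_smul]
  have : (x ∘ τ) ∘ σ = x ∘ (τ * σ : Perm _) := by funext b; simp
  rw [this]
  simp only [Equiv.coe_mulLeft, Perm.sign_mul]
  push_cast
  rw [← mul_assoc, sign_sq, one_mul]

theorem asym_map (h : V →+ V) (s : (Fin k → X) → V) (x) : h (asym s x) = asym (fun y => h (s y)) x := by
  unfold asym
  rw [map_rat_smul h, map_sum]
  simp only [map_zsmul]

theorem asym_of_sk (s : (Fin k → X) → V) (hs : Sk s) : asym s = s := by
  funext x
  unfold asym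
  have : ∀ σ : Perm (Fin k), (Perm.sign σ : ℤ) • s (x ∘ σ) = s x := fun σ => by
    rw [hs, smul_smul, sign_sq, one_smul]
  simp only [this, Finset.sum_const, Finset.card_univ, Fintype.card_perm, Fintype.card_fin]
  rw [← Nat.cast_smul_eq_nsmul ℚ, smul_smul, inv_mul_cancel₀, one_smul]
  exact_mod_cast Nat.factorial_ne_zero k

theorem asym_eq_zero (s : (Fin k → X) → V) (x) (h : ∀ σ : Perm (Fin k), s (x ∘ σ) = 0) :
    asym s x = 0 := by
  unfold asym
  simp [h]

theorem sk_eq_zero_of_eq (s : (Fin k → X) → V) (hs : Sk s) (x) (a b) (hab : a ≠ b) (h : x a = x b) :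
    s x = 0 := by
  have h1 := hs (swap a b) x
  have h2 : x ∘ (swap a b) = x := by
    funext c
    simp only [Function.comp_apply, swap_apply_def]
    split_ifs with h3 h4
    · rw [h3, h]
    · rw [h4, h]
    · rfl
  rw [h2, Perm.sign_swap hab] at h1
  simp at h1
  have h3 : (2 : ℚ) • s x = 0 := by
    rw [two_smul]; nth_rewrite 1 [h1]; simp
  simpa using h3

end

section
variable {V : Type*} [AddCommGroup V] {E : Type*} {k : ℕ}

/-- the derivations indexed by `ℕ ⊕ E` -/
def DJ (D : ℕ → V →+ V) : (ℕ ⊕ E) → V → V := Sum.elim (fun t => D t) (fun _ _ => 0)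

/-- the differential in the adapted basis -/
def dl (D : ℕ → V →+ V) (c : (Fin k → ℕ ⊕ E) → V) : (Fin (k + 1) → ℕ ⊕ E) → V :=
  exd (fun y => DJ D (y 0) (c (Fin.tail y)))

/-- boundedness -/
def Bd (D : ℕ → V →+ V) (T : ℕ) (c : (Fin k → ℕ ⊕ E) → V) : Prop :=
  (∀ j a s, j a = Sum.inl s → T ≤ s → c j = 0) ∧ (∀ j s, T ≤ s → D s (c j) = 0)

theorem DJ_add (D : ℕ → V →+ V) (x : ℕ ⊕ E) (a b : V) : DJ D x (a + b) = DJ D x a + DJ D x b := by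
  cases x <;> simp [DJ]

theorem DJ_zero (D : ℕ → V →+ V) (x : ℕ ⊕ E) : DJ D x 0 = 0 := by
  cases x <;> simp [DJ]

theorem DJ_zsmul (D : ℕ → V →+ V) (x : ℕ ⊕ E) (n : ℤ) (a : V) : DJ D x (n • a) = n • DJ D x a := by
  cases x <;> simp [DJ]

theorem DJ_comm (D : ℕ → V →+ V) (hc : ∀ s t f, D s (D t f) = D t (D s f)) (x y : ℕ ⊕ E) (a : V) :
    DJ D x (DJ D y a) = DJ D y (DJ D x a) := by
  cases x <;> cases y <;> simp [DJ, hc]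

theorem dl_apply (D : ℕ → V →+ V) (c : (Fin k → ℕ ⊕ E) → V) (j) :
    dl D c j = ∑ α : Fin (k + 1), (-1 : ℤ) ^ (α : ℕ) • DJ D (j α) (c (fun b => j (α.succAbove b))) := by
  unfold dl exd
  simp only [comp_cyc, Fin.cons_zero, Fin.tail_cons]

theorem dl_dl (D : ℕ → V →+ V) (hc : ∀ s t f, D s (D t f) = D t (D s f)) (c : (Fin k → ℕ ⊕ E) → V) :
    dl D (dl D c) = 0 :=
  exd_exd (DJ D) (DJ_add D) (DJ_comm D hc) c

theorem dl_sk (D : ℕ → V →+ V) (c : (Fin k → ℕ ⊕ E) → V) (hc : Sk c) : Sk (dl D c) := by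
  apply exd_sk
  intro x0 σ y
  simp only [Fin.cons_zero, Fin.tail_cons]
  rw [hc, DJ_zsmul]

theorem dl_add (D : ℕ → V →+ V) (c d : (Fin k → ℕ ⊕ E) → V) : dl D (c + d) = dl D c + dl D d := by
  funext j
  simp [dl_apply, DJ_add, Finset.sum_add_distrib]

theorem dl_zero (D : ℕ → V →+ V) : dl D (0 : (Fin k → ℕ ⊕ E) → V) = 0 := by
  funext j
  simp [dl_apply, DJ_zero]

theorem dl_sub (D : ℕ → V →+ V) (c d : (Fin k → ℕ ⊕ E) → V) : dl D (c - d) = dl D c - dl D d := by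
  have := dl_add D (c - d) d
  rw [sub_add_cancel] at this
  rw [this, add_sub_cancel_right]

theorem dl_inr (D : ℕ → V →+ V) (c : (Fin k → ℕ ⊕ E) → V) (a : Fin (k + 1) → E) :
    dl D c (Sum.inr ∘ a) = 0 := by
  simp [dl_apply, DJ]

theorem Bd.dl {D : ℕ → V →+ V} (hc : ∀ s t f, D s (D t f) = D t (D s f)) {T : ℕ}
    {c : (Fin k → ℕ ⊕ E) → V} (h : Bd D T c) : Bd D T (dl D c) := by
  constructor
  · intro j a s hj hs
    rw [dl_apply]
    refine Finset.sum_eq_zero fun α _ => ?_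
    by_cases hα : α = a
    · subst hα; rw [hj]; simp [DJ, h.2 _ s hs]
    · obtain ⟨b, hb⟩ := Fin.exists_succAbove_eq (Ne.symm hα)
      rw [h.1 _ b s (by rw [hb, hj]) hs, DJ_zero, smul_zero]
  · intro j s hs
    rw [dl_apply, map_sum]
    refine Finset.sum_eq_zero fun α _ => ?_
    rw [map_zsmul]
    cases j α with
    | inl t => simp [DJ, hc s t, h.2 _ s hs]
    | inr e => simp [DJ]

theorem Bd.mono {D : ℕ → V →+ V} {T T' : ℕ} (hT : T ≤ T')
    {c : (Fin k → ℕ ⊕ E) → V} (h : Bd D T c) : Bd D T' c :=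
  ⟨fun j a s hj hs => h.1 j a s hj (hT.trans hs), fun j s hs => h.2 j s (hT.trans hs)⟩

theorem Bd.add {D : ℕ → V →+ V} {T : ℕ} 
    {c d : (Fin k → ℕ ⊕ E) → V} (h : Bd D T c) (h' : Bd D T d) : Bd D T (c + d) :=
  ⟨fun j a s hj hs => by simp [h.1 j a s hj hs, h'.1 j a s hj hs],
    fun j s hs => by simp [h.2 j s hs, h'.2 j s hs]⟩

theorem Bd.sub {D : ℕ → V →+ V} {T : ℕ} 
    {c d : (Fin k → ℕ ⊕ E) → V} (h : Bd D T c) (h' : Bd D T d) : Bd D T (c - d) :=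
  ⟨fun j a s hj hs => by simp [h.1 j a s hj hs, h'.1 j a s hj hs],
    fun j s hs => by simp [h.2 j s hs, h'.2 j s hs]⟩

theorem poincare [Module ℚ V] (D : ℕ → V →+ V) (hc : ∀ s t f, D s (D t f) = D t (D s f))
    (hn : ∀ t f, (∀ s, t < s → D s f = 0) → ∃ g, (∀ s, t < s → D s g = 0) ∧ D t g = f) (T : ℕ) :
    ∀ c : (Fin (k + 1) → ℕ ⊕ E) → V, Sk c → dl D c = 0 → (∀ a, c (Sum.inr ∘ a) = 0) → Bd D T c →
      ∃ r : (Fin k → ℕ ⊕ E) → V, Sk r ∧ Bd D T r ∧ c = dl D r := by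
  induction T with
  | zero =>
    intro c _ _ h0 hb
    refine ⟨0, sk_zero, ⟨by simp, by simp⟩, ?_⟩
    rw [dl_zero]
    funext j
    by_cases h : ∃ a s, j a = Sum.inl s
    · obtain ⟨a, s, h⟩ := h
      exact hb.1 j a s h (Nat.zero_le _)
    · push Not at h
      have : ∀ a, ∃ e, j a = Sum.inr e := by
        intro a
        rcases hja : j a with s | e
        · exact (h a s hja).elim
        · exact ⟨e, rfl⟩
      choose a ha using this
      have : j = Sum.inr ∘ a := funext ha
      rw [this, h0]; rfl
  | succ T ih =>
    intro c hsk hcl h0 hb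
    let B : (Fin k → ℕ ⊕ E) → V := fun j => c (Fin.cons (Sum.inl T) j)
    have hBsk : Sk B := by
      intro σ j
      have := hsk (Perm.decomposeFin.symm (0, σ)) (Fin.cons (Sum.inl T) j)
      have h1 : (Fin.cons (Sum.inl T) j : Fin (k+1) → ℕ ⊕ E) ∘ (Perm.decomposeFin.symm (0, σ)) = Fin.cons (Sum.inl T) (j ∘ σ) := by
        funext b
        refine Fin.cases ?_ (fun b => ?_) b
        · simp
        · simp
      rw [h1] at this
      simp only [B, this]
      simp
    have hB0 : ∀ j a s, j a = Sum.inl s → T ≤ s → B j = 0 := by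
      intro j a s hj hs
      rcases hs.eq_or_lt with rfl | hs
      · exact sk_eq_zero_of_eq c hsk _ 0 a.succ (Fin.succ_ne_zero a).symm (by simp [hj])
      · exact hb.1 _ a.succ s (by simp [hj]) hs
    have hBD : ∀ j, ∃ g, (∀ s, T < s → D s g = 0) ∧ D T g = B j ∧ (B j = 0 → g = 0) := by
      intro j
      by_cases h : B j = 0
      · exact ⟨0, by simp, by simp [h], fun _ => rfl⟩
      · obtain ⟨g, h1, h2⟩ := hn T (B j) (fun s hs => hb.2 _ s hs)
        exact ⟨g, h1, h2, fun h' => (h h').elim⟩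
    choose g hg1 hg2 hg3 using hBD
    let R := asym g
    have hRsk : Sk R := asym_sk g
    have hRT : ∀ j, D T (R j) = B j := by
      intro j
      simp only [R]
      rw [asym_map]
      simp only [hg2]
      rw [asym_of_sk B hBsk]
    have hRs : ∀ j s, T < s → D s (R j) = 0 := by
      intro j s hs
      simp only [R]
      rw [asym_map]
      exact asym_eq_zero _ _ fun σ => hg1 _ s hs
    have hR0 : ∀ j a s, j a = Sum.inl s → T ≤ s → R j = 0 := by
      intro j a s hj hs
      refine asym_eq_zero _ _ fun σ => hg3 _ (hB0 _ (σ.symm a) s (by simp [hj]) hs)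
    have hRb : Bd D (T + 1) R := ⟨fun j a s hj hs => hR0 j a s hj (by omega), fun j s hs => hRs j s hs⟩
    let q := c - dl D R
    have hqsk : Sk q := hsk.sub (dl_sk D R hRsk)
    have hqcl : dl D q = 0 := by simp only [q]; rw [dl_sub, hcl, dl_dl D hc, sub_zero]
    have hqb : Bd D (T + 1) q := hb.sub (hRb.dl hc)
    have hqT0 : ∀ j : Fin (k+1) → ℕ ⊕ E, j 0 = Sum.inl T → q j = 0 := by
      intro j hj
      simp only [q, Pi.sub_apply, dl_apply]
      rw [Fin.sum_univ_succ, Finset.sum_eq_zero]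
      · simp only [hj, DJ, Sum.elim_inl, hRT, B]
        have : j = Fin.cons (Sum.inl T) (fun b => j ((0 : Fin (k+1)).succAbove b)) := by
          funext b
          refine Fin.cases ?_ (fun b => ?_) b
          · simp [hj]
          · simp
        rw [← this]; simp
      · intro α _
        cases k with
        | zero => exact α.elim0
        | succ k =>
          rw [hR0 _ 0 T (by simpa using hj) le_rfl, DJ_zero, smul_zero]
    have hqT : ∀ (j : Fin (k+1) → ℕ ⊕ E) a, j a = Sum.inl T → q j = 0 := by
      intro j a hj
      have h1 := hqsk (swap 0 a) j
      rw [hqT0 (j ∘ swap 0 a) (by simp [hj])] at h1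
      rcases Int.units_eq_one_or (Perm.sign (swap 0 a)) with h | h <;> simpa [h] using h1.symm
    have hqDT : ∀ j, D T (q j) = 0 := by
      intro j
      have h1 := congrFun hqcl (Fin.cons (Sum.inl T) j)
      rw [dl_apply, Fin.sum_univ_succ, Finset.sum_eq_zero] at h1
      · simpa [DJ] using h1
      · intro α _
        rw [hqT _ 0 (by simp), DJ_zero, smul_zero]
    have hqb' : Bd D T q := by
      constructor
      · intro j a s hj hs
        rcases hs.eq_or_lt with rfl | hs
        · exact hqT j a hj
        · exact hqb.1 j a s hj hs
      · intro j s hs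
        rcases hs.eq_or_lt with rfl | hs
        · exact hqDT j
        · exact hqb.2 j s hs
    obtain ⟨r, hr1, hr2, hr3⟩ := ih q hqsk hqcl
      (fun a => by simp only [q, Pi.sub_apply, h0, dl_inr, sub_zero]) hqb'
    refine ⟨r + R, hr1.add hRsk, (hr2.mono (Nat.le_succ T)).add hRb, ?_⟩
    rw [dl_add, ← hr3]
    simp [q]
end
end S19


namespace S19

open Equiv Function

/-- action of a matrix on tensors -/
noncomputable def act {V I J : Type*} [CommRing V] {k : ℕ} (M : J → I → V) (c : (Fin k → J) → V) :
    (Fin k → I) → V :=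
  fun x => ∑ᶠ j : Fin k → J, c j * ∏ a, M (j a) (x a)

section
variable {V I J L : Type*} [CommRing V] {k : ℕ}

theorem exists_box (c : (Fin k → J) → V) (hc : (support c).Finite) :
    ∃ s : Finset J, ∀ j, c j ≠ 0 → ∀ a, j a ∈ s := by
  classical
  refine ⟨hc.toFinset.biUnion (fun j => Finset.univ.image j), fun j hj a => ?_⟩
  simp only [Finset.mem_biUnion, Set.Finite.mem_toFinset, mem_support, Finset.mem_image, Finset.mem_univ, true_and]
  exact ⟨j, hj, a, rfl⟩

theorem box_finite (c : (Fin k → J) → V) (s : Finset J) (h : ∀ j, c j ≠ 0 → ∀ a, j a ∈ s) :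
    (support c).Finite := by
  classical
  refine (Fintype.piFinset (fun _ : Fin k => s)).finite_toSet.subset fun j hj => ?_
  simp only [Finset.mem_coe, Fintype.mem_piFinset]
  exact h j hj

theorem act_eq [DecidableEq J] (M : J → I → V) (c : (Fin k → J) → V) (s : Finset J)
    (h : ∀ j, c j ≠ 0 → ∀ a, j a ∈ s) (x) :
    act M c x = ∑ j ∈ Fintype.piFinset (fun _ : Fin k => s), c j * ∏ a, M (j a) (x a) := by
  unfold act
  refine finsum_eq_finsetSum_of_support_subset _ fun j hj => ?_
  simp only [Finset.mem_coe, Fintype.mem_piFinset]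
  refine h j fun h0 => hj ?_
  simp [h0]

theorem act_finite (M : J → I → V) (hM : ∀ j, (support (M j)).Finite) (c : (Fin k → J) → V)
    (hc : (support c).Finite) : (support (act M c)).Finite := by
  classical
  obtain ⟨s, hs⟩ := exists_box c hc
  refine box_finite _ (s.biUnion fun j => (hM j).toFinset) fun x hx a => ?_
  rw [act_eq M c s hs] at hx
  obtain ⟨j, hj, hne⟩ := Finset.exists_ne_zero_of_sum_ne_zero hx
  simp only [Finset.mem_biUnion, Set.Finite.mem_toFinset, mem_support]
  refine ⟨j a, Fintype.mem_piFinset.1 hj a, fun h0 => hne ?_⟩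
  rw [Finset.prod_eq_zero (Finset.mem_univ a) h0, mul_zero]

theorem act_act (M : J → I → V) (N : I → L → V) (hM : ∀ j, (support (M j)).Finite) (c : (Fin k → J) → V)
    (hc : (support c).Finite) : act N (act M c) = act (fun j y => ∑ᶠ x, M j x * N x y) c := by
  classical
  obtain ⟨s, hs⟩ := exists_box c hc
  obtain ⟨s', hs'⟩ := exists_box _ (act_finite M hM c hc)
  have hx : ∃ t : Finset I, s' ⊆ t ∧ ∀ j ∈ s, ∀ x, M j x ≠ 0 → x ∈ t := by
    refine ⟨s' ∪ s.biUnion fun j => (hM j).toFinset, Finset.subset_union_left, fun j hj x hx => ?_⟩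
    refine Finset.mem_union_right _ ?_
    simp only [Finset.mem_biUnion, Set.Finite.mem_toFinset, mem_support]
    exact ⟨j, hj, hx⟩
  obtain ⟨t, ht, ht'⟩ := hx
  funext y
  rw [act_eq N _ t (fun j hj a => ht (hs' j hj a)), act_eq _ c s hs]
  simp only [act_eq M c s hs, Finset.sum_mul]
  rw [Finset.sum_comm]
  refine Finset.sum_congr rfl fun j hj => ?_
  have h1 : ∀ a, ∑ᶠ x, M (j a) x * N x (y a) = ∑ x ∈ t, M (j a) x * N x (y a) := fun a =>
    finsum_eq_finsetSum_of_support_subset _ fun x hx =>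
      ht' (j a) (Fintype.mem_piFinset.1 hj a) x fun h0 => hx (by simp [h0])
  simp only [h1]
  rw [Finset.prod_univ_sum, Finset.mul_sum]
  refine Finset.sum_congr rfl fun x _ => ?_
  rw [Finset.prod_mul_distrib, mul_assoc]

theorem act_proj [DecidableEq J] (f : I → J) (c : (Fin k → J) → V) :
    act (fun j x => if j = f x then 1 else 0) c = fun x => c (f ∘ x) := by
  funext x
  unfold act
  rw [finsum_eq_single _ (f ∘ x)]
  · simp
  · intro j hj
    obtain ⟨a, ha⟩ := Function.ne_iff.1 hj
    rw [Finset.prod_eq_zero (Finset.mem_univ a), mul_zero]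
    exact if_neg ha

theorem act_sk (M : J → I → V) (c : (Fin k → J) → V) (hc : Sk c) : Sk (act M c) := by
  intro σ x
  unfold act
  have hz : ∀ g : (Fin k → J) → V, (Perm.sign σ : ℤ) • ∑ᶠ j, g j = ∑ᶠ j, (Perm.sign σ : ℤ) • g j := by
    intro g
    rcases Int.units_eq_one_or (Perm.sign σ) with h | h
    · simp [h]
    · simp [h, finsum_neg_distrib]
  rw [hz, ← finsum_comp_equiv (Equiv.arrowCongr σ (Equiv.refl J)).symm]
  refine finsum_congr fun j => ?_
  have h1 : (Equiv.arrowCongr σ (Equiv.refl J)).symm j = j ∘ σ := by funext a; simp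
  rw [h1, hc, ← Equiv.prod_comp σ (fun a => M (j a) (x a)), smul_mul_assoc]
  rfl

theorem act_add (M : J → I → V) (c d : (Fin k → J) → V) (hc : (support c).Finite) (hd : (support d).Finite) :
    act M (c + d) = act M c + act M d := by
  funext x
  unfold act
  simp only [Pi.add_apply, add_mul]
  refine finsum_add_distrib (hc.subset ?_) (hd.subset ?_)
  · intro j hj h0; exact hj (by simp [h0])
  · intro j hj h0; exact hj (by simp [h0])

theorem act_smul (M : J → I → V) (v : V) (c : (Fin k → J) → V)  (hc : (support c).Finite) :
    act M (fun j => v * c j) = fun x => v * act M c x := by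
  funext x
  unfold act
  rw [mul_finsum']
  · simp only [mul_assoc]
  · refine hc.subset ?_
    intro j hj h0; exact hj (by simp [h0])

theorem act_zero (M : J → I → V) : act M (0 : (Fin k → J) → V) = 0 := by
  funext x
  simp [act]

theorem act_fin_zero (M : J → I → V) (c : (Fin 0 → J) → V) (x) (j) : act M c x = c j := by
  unfold act
  rw [finsum_eq_single _ j]
  · simp
  · intro j' h; exact (h (Subsingleton.elim _ _)).elim

end
end S19


namespace S19

/-- coefficients of the adjoint recursion -/
def adjG {F : Type*} [Field F] (d : F → F) (a : ℕ → F) (r : ℕ) (g : F) : ℕ → F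
  | 0 => g
  | q + 1 => -(d (adjG d a r g q) + g * a (r - 1 - q))

section
variable {F : Type*} [Field F] (d : F →+ F)

theorem adjG_op (hd : ∀ x y, d (x * y) = d x * y + x * d y) (a : ℕ → F) (r q : ℕ) : ∃ b : ℕ → F, b q ≠ 0 ∧
    ∀ g, adjG d a r g q = ∑ n ∈ Finset.range (q + 1), b n * d^[n] g := by
  suffices ∃ b : ℕ → F, b q = (-1) ^ q ∧ (∀ n, q < n → b n = 0) ∧
    ∀ g, adjG d a r g q = ∑ n ∈ Finset.range (q + 1), b n * d^[n] g by
    obtain ⟨b, h1, -, h3⟩ := this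
    exact ⟨b, by rw [h1]; simp, h3⟩
  induction q with
  | zero => exact ⟨fun n => if n = 0 then 1 else 0, by simp, fun n hn => by simp; omega, by simp [adjG]⟩
  | succ q ih =>
    obtain ⟨b, h1, h2, h3⟩ := ih
    refine ⟨fun n => -(d (b n) + (if n = 0 then a (r - 1 - q) else b (n - 1))), ?_, ?_, ?_⟩
    · simp [h1, h2 (q+1) (by omega), pow_succ]
    · intro n hn
      simp [h2 n (by omega), h2 (n-1) (by omega)]
      omega
    · intro g
      simp only [adjG, h3, map_sum, hd]
      rw [Finset.sum_add_distrib]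
      have e1 : ∑ n ∈ Finset.range (q + 1), d (b n) * d^[n] g = ∑ n ∈ Finset.range (q + 1 + 1), d (b n) * d^[n] g := by
        rw [Finset.sum_range_succ _ (q+1), h2 (q+1) (by omega)]; simp
      have e2 : ∑ n ∈ Finset.range (q + 1), b n * d (d^[n] g) + g * a (r - 1 - q) =
          ∑ n ∈ Finset.range (q + 1 + 1), (if n = 0 then a (r - 1 - q) else b (n - 1)) * d^[n] g := by
        rw [Finset.sum_range_succ' _ (q+1)]
        simp [Function.iterate_succ_apply', mul_comm]
      rw [add_assoc, e1, e2, ← Finset.sum_add_distrib, ← Finset.sum_neg_distrib]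
      refine Finset.sum_congr rfl fun n _ => by ring

variable {U : Type*} [AddCommGroup U] [Module F U]

theorem exists_horizontal (hd : ∀ x y, d (x * y) = d x * y + x * d y) [FiniteDimensional F U]
    (hlc : ∀ (M : ℕ) (a : ℕ → F), a M ≠ 0 → 1 ≤ M →
      ∃ u : F, u ≠ 0 ∧ ∑ n ∈ Finset.range (M + 1), a n * d^[n] u = 0)
    (nb : U →+ U) (hnb : ∀ (f : F) (u : U), nb (f • u) = d f • u + f • nb u)
    (S : Submodule F U) (v : U) (hv : v ∉ S) : ∃ h, h ∉ S ∧ nb h ∈ S := by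
  classical
  have hex : ∃ r : ℕ, ∃ s ∈ S, ∃ a : ℕ → F, nb^[r] v = s + ∑ i ∈ Finset.range r, a i • nb^[i] v := by
    let W : ℕ →o Submodule F U := ⟨fun r => Submodule.span F ((fun i => nb^[i] v) '' (Finset.range r : Finset ℕ)), by
      intro r r' h
      refine Submodule.span_mono (Set.image_mono ?_)
      exact_mod_cast Finset.range_mono h⟩
    obtain ⟨n, hn⟩ := monotone_stabilizes_iff_noetherian.2 (inferInstance : IsNoetherian F U) W
    have h1 : nb^[n] v ∈ W (n + 1) := Submodule.subset_span ⟨n, by simp, rfl⟩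
    rw [← hn (n+1) (by omega)] at h1
    obtain ⟨c, hc⟩ := (Submodule.mem_span_image_finset_iff_exists_fun F).1 h1
    refine ⟨n, 0, S.zero_mem, fun i => if h : i ∈ Finset.range n then c ⟨i, h⟩ else 0, ?_⟩
    rw [zero_add, ← hc, ← Finset.sum_coe_sort (Finset.range n)]
    refine Finset.sum_congr rfl fun i _ => ?_
    simp only [Finset.coe_mem, dif_pos]
  let r := Nat.find hex
  obtain ⟨s, hs, a, ha⟩ := Nat.find_spec hex
  have hmin : ∀ m, m < r → ¬ ∃ s ∈ S, ∃ a : ℕ → F, nb^[m] v = s + ∑ i ∈ Finset.range m, a i • nb^[i] v :=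
    fun m hm => Nat.find_min hex hm
  change nb^[r] v = s + ∑ i ∈ Finset.range r, a i • nb^[i] v at ha
  have hr : 1 ≤ r := by
    by_contra h
    have h0 : r = 0 := by omega
    rw [h0] at ha
    simp at ha
    exact hv (ha ▸ hs)
  obtain ⟨b, hb, hb'⟩ := adjG_op d hd a r r
  obtain ⟨g, hg, hg0⟩ := hlc r b hb hr
  have hGr : adjG d a r g r = 0 := by rw [hb', hg0]
  set G := adjG d a r g with hG
  have hG0 : G 0 = g := rfl
  have hGs : ∀ i, i < r → G (r - i) = -(d (G (r - 1 - i)) + g * a i) := by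
    intro i hi
    have : r - i = (r - 1 - i) + 1 := by omega
    rw [this, hG]
    simp only [adjG]
    congr 4
    omega
  refine ⟨∑ i ∈ Finset.range r, G (r - 1 - i) • nb^[i] v, ?_, ?_⟩
  · intro hS
    obtain ⟨r', hr'⟩ : ∃ r', r = r' + 1 := ⟨r - 1, by omega⟩
    refine hmin r' (by omega) ⟨g⁻¹ • (∑ i ∈ Finset.range r, G (r - 1 - i) • nb^[i] v), S.smul_mem _ hS,
      fun i => -(g⁻¹ * G (r - 1 - i)), ?_⟩
    rw [hr', Finset.sum_range_succ]
    simp only [Nat.add_sub_cancel, Nat.sub_self, hG0, smul_add, Finset.smul_sum, smul_smul, neg_smul,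
      Finset.sum_neg_distrib]
    rw [inv_mul_cancel₀ hg, one_smul]
    abel
  · have e : nb (∑ i ∈ Finset.range r, G (r - 1 - i) • nb^[i] v) = g • s := by
      rw [map_sum]
      simp only [hnb, ← Function.iterate_succ_apply' nb]
      rw [Finset.sum_add_distrib]
      have e2 : ∑ i ∈ Finset.range r, G (r - 1 - i) • nb^[i.succ] v =
          ∑ i ∈ Finset.range r, G (r - i) • nb^[i] v + g • nb^[r] v := by
        have h1 := Finset.sum_range_succ (fun i => G (r - i) • nb^[i] v) r
        have h2 := Finset.sum_range_succ' (fun i => G (r - i) • nb^[i] v) r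
        rw [h2] at h1
        simp only [Nat.sub_zero, hGr, zero_smul, add_zero, Nat.sub_self, hG0] at h1
        rw [← h1]
        refine Finset.sum_congr rfl fun i _ => ?_
        congr 2
        omega
      rw [e2, ha, smul_add, ← add_assoc, ← Finset.sum_add_distrib, Finset.smul_sum]
      rw [add_comm (g • s), ← add_assoc, ← Finset.sum_add_distrib]
      rw [Finset.sum_eq_zero, zero_add]
      intro i hi
      rw [hGs i (Finset.mem_range.1 hi), smul_smul, ← add_smul, ← add_smul]
      ring_nf
      simp
    rw [e]
    exact S.smul_mem _ hs

theorem exists_horizontal_basis (hd : ∀ x y, d (x * y) = d x * y + x * d y) [FiniteDimensional F U]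
    (hlc : ∀ (M : ℕ) (a : ℕ → F), a M ≠ 0 → 1 ≤ M →
      ∃ u : F, u ≠ 0 ∧ ∑ n ∈ Finset.range (M + 1), a n * d^[n] u = 0)
    (hsurj : Function.Surjective d)
    (nb : U →+ U) (hnb : ∀ (f : F) (u : U), nb (f • u) = d f • u + f • nb u) :
    ∃ b : Module.Basis (Fin (Module.finrank F U)) F U, ∀ i, nb (b i) = 0 := by
  have hS : ⊤ ≤ Submodule.span F {u : U | nb u = 0} := by
    by_contra hS
    obtain ⟨v, -, hv⟩ := SetLike.not_le_iff_exists.1 hS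
    obtain ⟨h, h1, h2⟩ := exists_horizontal d hd hlc nb hnb _ v hv
    obtain ⟨w, hw, hw2⟩ : ∃ w ∈ Submodule.span F {u : U | nb u = 0}, nb w = nb h := by
      clear h1
      generalize nb h = x at h2
      induction h2 using Submodule.span_induction with
      | zero => exact ⟨0, Submodule.zero_mem _, by simp⟩
      | add x y _ _ hx hy =>
        obtain ⟨w, hw, hw'⟩ := hx
        obtain ⟨w2, hw2, hw2'⟩ := hy
        exact ⟨w + w2, Submodule.add_mem _ hw hw2, by simp [hw', hw2']⟩
      | mem x hx =>
        obtain ⟨t, ht⟩ := hsurj 1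
        refine ⟨t • x, Submodule.smul_mem _ _ (Submodule.subset_span hx), ?_⟩
        rw [hnb, ht, one_smul, show nb x = 0 from hx, smul_zero, add_zero]
      | smul c x hx' hx =>
        clear hx
        induction hx' using Submodule.span_induction generalizing c with
        | zero => exact ⟨0, Submodule.zero_mem _, by simp⟩
        | add x y _ _ hx hy =>
          obtain ⟨w, hw, hw'⟩ := hx c
          obtain ⟨w2, hw2, hw2'⟩ := hy c
          exact ⟨w + w2, Submodule.add_mem _ hw hw2, by simp [hw', hw2']⟩
        | mem x hx =>
          obtain ⟨t, ht⟩ := hsurj c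
          refine ⟨t • x, Submodule.smul_mem _ _ (Submodule.subset_span hx), ?_⟩
          rw [hnb, ht, show nb x = 0 from hx, smul_zero, add_zero]
        | smul c' x _ hx =>
          rw [smul_smul]; exact hx _
    refine h1 ?_
    have : h - w ∈ Submodule.span F {u : U | nb u = 0} :=
      Submodule.subset_span (by simp [hw2])
    simpa using Submodule.add_mem _ this hw
  let b := Module.Basis.ofSpan hS
  have : Fintype _ := FiniteDimensional.fintypeBasisIndex b
  have hcard := Module.finrank_eq_card_basis b
  refine ⟨b.reindex (Fintype.equivFinOfCardEq hcard.symm), fun i => ?_⟩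
  rw [Module.Basis.reindex_apply]
  exact Module.Basis.ofSpan_subset hS ⟨_, rfl⟩

end
end S19


namespace S19

theorem exists_fund_field {F : Type*} [Field F] (d : F →+ F)
    (hd : ∀ x y, d (x * y) = d x * y + x * d y)
    (hlc : ∀ (M : ℕ) (a : ℕ → F), a M ≠ 0 → 1 ≤ M →
      ∃ u : F, u ≠ 0 ∧ ∑ n ∈ Finset.range (M + 1), a n * d^[n] u = 0)
    (hsurj : Function.Surjective d) (l N : ℕ) (K : Fin l → Fin l → ℕ → F)
    (hK : (Matrix.of fun i j : Fin l => K i j N).det ≠ 0) :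
    ∃ (z : Fin (N * l) → Fin l → F) (Y : Fin (N * l) → Fin l → ℕ → F),
      (∀ a j, ∑ i, ∑ m ∈ Finset.range (N + 1), K j i m * d^[m] (z a i) = 0) ∧
      (∀ a b, ∑ i, ∑ m ∈ Finset.range N, Y a i m * d^[m] (z b i) = if a = b then 1 else 0) ∧
      (∀ i m i' m', m < N → m' < N → ∑ a, d^[m] (z a i) * Y a i' m' =
        if i = i' ∧ m = m' then 1 else 0) := by
  classical
  let KN : Matrix (Fin l) (Fin l) F := Matrix.of fun i j : Fin l => K i j N
  have hKi : KN * KN⁻¹ = 1 := Matrix.mul_nonsing_inv _ (isUnit_iff_ne_zero.2 hK)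
  let low : (Fin l × Fin N → F) → Fin l → F := fun y j => ∑ i', ∑ m' : Fin N, K j i' m' * y (i', m')
  let A : (Fin l × Fin N → F) → (Fin l × Fin N → F) := fun y p =>
    if h : (p.2 : ℕ) + 1 < N then y (p.1, ⟨p.2 + 1, h⟩) else - ∑ j, KN⁻¹ p.1 j * low y j
  have low_add : ∀ x y j, low (x + y) j = low x j + low y j := by
    intro x y j
    simp [low, mul_add, Finset.sum_add_distrib]
  have low_smul : ∀ (f : F) y j, low (f • y) j = f * low y j := by
    intro x y j
    simp only [low, Pi.smul_apply, smul_eq_mul, Finset.mul_sum]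
    refine Finset.sum_congr rfl fun _ _ => Finset.sum_congr rfl fun _ _ => by ring
  let nb : (Fin l × Fin N → F) →+ (Fin l × Fin N → F) := AddMonoidHom.mk' (fun y p => d (y p) - A y p) (by
    intro x y
    funext p
    simp only [A, Pi.add_apply, map_add]
    split_ifs with h
    · ring
    · simp only [low_add, mul_add, Finset.sum_add_distrib]; ring)
  have hnb : ∀ (f : F) u, nb (f • u) = d f • u + f • nb u := by
    intro f u
    funext p
    simp only [nb, AddMonoidHom.mk'_apply, A, Pi.smul_apply, smul_eq_mul, Pi.add_apply, hd, low_smul]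
    split_ifs with h
    · ring
    · have : ∑ j, KN⁻¹ p.1 j * (f * low u j) = f * ∑ j, KN⁻¹ p.1 j * low u j := by
        rw [Finset.mul_sum]
        exact Finset.sum_congr rfl fun _ _ => by ring
      rw [this]; ring
  obtain ⟨b0, hb0⟩ := exists_horizontal_basis d hd hlc hsurj nb hnb
  have hfr : Module.finrank F (Fin l × Fin N → F) = N * l := by
    simp [mul_comm]
  let b := b0.reindex (finCongr hfr)
  have hb : ∀ a p, d (b a p) = A (b a) p := by
    intro a p
    have : nb (b a) = 0 := by simp only [b, Module.Basis.reindex_apply]; exact hb0 _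
    have := congrFun this p
    simpa [nb, sub_eq_zero] using this
  let z : Fin (N * l) → Fin l → F := fun a i => if h : 0 < N then b a (i, ⟨0, h⟩) else 0
  have hz : ∀ a i m (h : m < N), d^[m] (z a i) = b a (i, ⟨m, h⟩) := by
    intro a i m
    induction m with
    | zero => intro h; simp [z, h]
    | succ m ih =>
      intro h
      rw [Function.iterate_succ_apply', ih (by omega), hb]
      simp [A, h]
  refine ⟨z, fun a i m => if h : m < N then b.repr (Pi.single (i, ⟨m, h⟩) 1) a else 0, ?_, ?_, ?_⟩
  · intro a j
    rcases Nat.eq_zero_or_pos N with h0 | h0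
    · subst h0; exact (Fin.cast (by simp) a : Fin 0).elim0
    simp only [Finset.sum_range_succ, Finset.sum_add_distrib]
    have e1 : ∀ i, d^[N] (z a i) = - ∑ j, KN⁻¹ i j * low (b a) j := by
      intro i
      obtain ⟨n, rfl⟩ : ∃ n, N = n + 1 := ⟨N - 1, by omega⟩
      rw [Function.iterate_succ_apply', hz a i n (by omega), hb]
      simp [A]
    have e2 : ∑ i, ∑ m ∈ Finset.range N, K j i m * d^[m] (z a i) = low (b a) j := by
      simp only [low]
      refine Finset.sum_congr rfl fun i _ => ?_
      rw [Finset.sum_range]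
      exact Finset.sum_congr rfl fun m _ => by rw [hz a i m m.2]
    have e3 : ∑ i, K j i N * d^[N] (z a i) = - low (b a) j := by
      simp only [e1, mul_neg, Finset.sum_neg_distrib, Finset.mul_sum]
      rw [Finset.sum_comm]
      have : ∀ j', ∑ i, K j i N * (KN⁻¹ i j' * low (b a) j') = (KN * KN⁻¹) j j' * low (b a) j' := by
        intro j'
        rw [Matrix.mul_apply, Finset.sum_mul]
        exact Finset.sum_congr rfl fun i _ => by simp [KN, mul_assoc]
      simp only [this, hKi, Matrix.one_apply]
      simp
    rw [e2, e3]; ring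
  · intro a b'
    have h1 : b.repr (b b') a = if a = b' then 1 else 0 := by
      rw [Module.Basis.repr_self, Finsupp.single_apply]; simp [eq_comm]
    rw [← h1]
    have h2 : b b' = ∑ p, b b' p • (Pi.single p 1 : Fin l × Fin N → F) := by
      funext q
      simp [Finset.sum_apply, Pi.single_apply]
    conv_rhs => rw [h2]
    rw [map_sum, Finsupp.finsetSum_apply, Fintype.sum_prod_type]
    refine Finset.sum_congr rfl fun i _ => ?_
    rw [Finset.sum_range]
    refine Finset.sum_congr rfl fun m _ => ?_
    rw [hz b' i m m.2]
    simp [mul_comm]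
  · intro i m i' m' hm hm'
    have h1 := congrFun (b.sum_repr (Pi.single (i', ⟨m', hm'⟩) 1)) (i, ⟨m, hm⟩)
    simp only [Finset.sum_apply, Pi.smul_apply, smul_eq_mul, Pi.single_apply, Prod.mk.injEq, Fin.mk.injEq] at h1
    rw [← h1]
    refine Finset.sum_congr rfl fun a _ => ?_
    rw [hz a i m hm]
    simp only [dif_pos hm']
    rw [mul_comm]

theorem exists_fund {V : Type*} [CommRing V] [Nontrivial V] (pd : V →+ V)
    (hd : ∀ x y, pd (x * y) = pd x * y + x * pd y) (Q : Subring V) (hQ : ∀ x ∈ Q, pd x ∈ Q)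
    (hlc : ∀ (M : ℕ) (a : ℕ → V), (∀ n, a n ∈ Q) → a M ≠ 0 →
      (∀ b ∈ Q, ∃ u ∈ Q, ∑ n ∈ Finset.range (M + 1), a n * pd^[n] u = b) ∧
      (1 ≤ M → ∃ u ∈ Q, u ≠ 0 ∧ ∑ n ∈ Finset.range (M + 1), a n * pd^[n] u = 0))
    (l N : ℕ) (K : Fin l → Fin l → ℕ → V) (hKQ : ∀ i j m, K i j m ∈ Q)
    (hK : IsUnit (Matrix.of fun i j : Fin l => K i j N)) :
    ∃ (z : Fin (N * l) → Fin l → V) (Y : Fin (N * l) → Fin l → ℕ → V) (Ki : Fin l → Fin l → V),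
      (∀ a i, z a i ∈ Q) ∧ (∀ a i m, Y a i m ∈ Q) ∧
      (∀ i j, Ki i j ∈ Q) ∧
      (∀ i j, ∑ r, Ki i r * K r j N = if i = j then 1 else 0) ∧
      (∀ i j, ∑ r, K i r N * Ki r j = if i = j then 1 else 0) ∧
      (∀ a j, ∑ i, ∑ m ∈ Finset.range (N + 1), K j i m * pd^[m] (z a i) = 0) ∧
      (∀ a b, ∑ i, ∑ m ∈ Finset.range N, Y a i m * pd^[m] (z b i) = if a = b then 1 else 0) ∧
      (∀ i m i' m', m < N → m' < N → ∑ a, pd^[m] (z a i) * Y a i' m' =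
        if i = i' ∧ m = m' then 1 else 0) := by
  have hF : IsField Q := by
    refine ⟨⟨0, 1, zero_ne_one⟩, mul_comm, ?_⟩
    intro a ha
    obtain ⟨u, hu, h⟩ := (hlc 0 (fun _ => a) (fun _ => a.2) (by simpa using ha)).1 1 Q.one_mem
    refine ⟨⟨u, hu⟩, Subtype.ext ?_⟩
    simpa using h
  let d : Q →+ Q := AddMonoidHom.mk' (fun x => ⟨pd x, hQ x x.2⟩) (fun x y => Subtype.ext (by simp))
  have hdc : ∀ x : Q, ((d x : Q) : V) = pd x := fun _ => rfl
  have hdi : ∀ (n : ℕ) (x : Q), ((d^[n] x : Q) : V) = pd^[n] x := by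
    intro n
    induction n with
    | zero => intro x; rfl
    | succ n ih => intro x; rw [Function.iterate_succ_apply', Function.iterate_succ_apply', hdc, ih]
  have hpd1 : pd 1 = 0 := by
    have := hd 1 1
    simpa using this
  let KF : Fin l → Fin l → ℕ → Q := fun i j m => ⟨K i j m, hKQ i j m⟩
  have hdetV : ((Matrix.of fun i j : Fin l => KF i j N).det : V) = (Matrix.of fun i j : Fin l => K i j N).det := by
    have := RingHom.map_det Q.subtype (Matrix.of fun i j : Fin l => KF i j N)
    rw [Subring.subtype_apply] at this
    rw [this]
    rfl
  have hdet : (Matrix.of fun i j : Fin l => KF i j N).det ≠ 0 := by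
    intro h
    rw [h] at hdetV
    have := (Matrix.isUnit_iff_isUnit_det _).1 hK
    rw [← hdetV] at this
    simp at this
  have hdetu : IsUnit (Matrix.of fun i j : Fin l => KF i j N).det := by
    obtain ⟨b, hb⟩ := hF.mul_inv_cancel hdet
    exact IsUnit.of_mul_eq_one b hb
  obtain ⟨z, Y, h1, h2, h3⟩ := @exists_fund_field Q hF.toField d (fun x y => Subtype.ext (hd x y)) (by
    intro M a ha hM
    obtain ⟨u, hu, hu0, h⟩ := (hlc M (fun n => (a n : V)) (fun n => (a n).2)
      (fun h => ha (Subtype.ext h))).2 hM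
    refine ⟨⟨u, hu⟩, fun h => hu0 (congrArg Subtype.val h), Subtype.ext ?_⟩
    refine Eq.trans ?_ h
    refine (map_sum Q.subtype _ _).trans ?_
    refine Finset.sum_congr rfl fun n _ => ?_
    exact congrArg ((a n : V) * ·) (hdi n ⟨u, hu⟩))
    (by
      intro b
      obtain ⟨u, hu, h⟩ := (hlc 1 (fun n => if n = 1 then 1 else 0) (fun n => by
        split_ifs; exacts [Q.one_mem, Q.zero_mem]) (by simp)).1 b b.2
      refine ⟨⟨u, hu⟩, Subtype.ext ?_⟩
      rw [hdc]
      simpa [Finset.sum_range_succ] using h) l N KF hdet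
  have hm1 := Matrix.nonsing_inv_mul _ hdetu
  have hm2 := Matrix.mul_nonsing_inv _ hdetu
  refine ⟨fun a i => z a i, fun a i m => Y a i m, fun i j => ((Matrix.of fun i j : Fin l => KF i j N)⁻¹ i j : Q),
    fun a i => (z a i).2, fun a i m => (Y a i m).2, fun i j => Subtype.property _, ?_, ?_, ?_, ?_, ?_⟩
  · intro i j
    have h := congrArg Subtype.val (congrFun (congrFun hm1 i) j)
    rw [Matrix.mul_apply, Matrix.one_apply] at h
    rw [AddSubmonoidClass.coe_finsetSum] at h
    refine h.trans ?_
    split_ifs <;> rfl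
  · intro i j
    have h := congrArg Subtype.val (congrFun (congrFun hm2 i) j)
    rw [Matrix.mul_apply, Matrix.one_apply] at h
    rw [AddSubmonoidClass.coe_finsetSum] at h
    refine h.trans ?_
    split_ifs <;> rfl
  · intro a j
    have h := congrArg Subtype.val (h1 a j)
    refine Eq.trans ?_ h
    refine Eq.symm ((map_sum Q.subtype _ _).trans (Finset.sum_congr rfl fun i _ => (map_sum Q.subtype _ _).trans (Finset.sum_congr rfl fun m _ => ?_)))
    exact congrArg (K j i m * ·) (hdi m (z a i))
  · intro a b
    have h := congrArg Subtype.val (h2 a b)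
    refine Eq.trans ?_ (h.trans (by split_ifs <;> rfl))
    refine Eq.symm ((map_sum Q.subtype _ _).trans (Finset.sum_congr rfl fun i _ => (map_sum Q.subtype _ _).trans (Finset.sum_congr rfl fun m _ => ?_)))
    exact congrArg ((Y a i m : V) * ·) (hdi m (z b i))
  · intro i m i' m' hm hm'
    have h := congrArg Subtype.val (h3 i m i' m' hm hm')
    refine Eq.trans ?_ (h.trans (by split_ifs <;> rfl))
    refine Eq.symm ((map_sum Q.subtype _ _).trans (Finset.sum_congr rfl fun a _ => ?_))
    exact congrArg (· * (Y a i' m' : V)) (hdi m (z a i))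

end S19


namespace S19

open Function

/-- shift in the second index -/
def sh {V : Type*} [CommRing V] {l : ℕ} (g : Fin l × ℕ → V) : Fin l × ℕ → V
  | (_, 0) => 0
  | (i, m + 1) => g (i, m)

/-- `pd + shift` -/
def opT {V : Type*} [CommRing V] {l : ℕ} (pd : V →+ V) (g : Fin l × ℕ → V) : Fin l × ℕ → V :=
  fun x => pd (g x) + sh g x

/-- the family of `w` -/
def wf {V : Type*} [CommRing V] {l : ℕ} (pd : V →+ V) (N : ℕ) (K : Fin l → Fin l → ℕ → V) :
    ℕ → Fin l → Fin l × ℕ → V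
  | 0, j => fun x => if x.2 ≤ N then K j x.1 x.2 else 0
  | n + 1, j => opT pd (wf pd N K n j)

/-- linear indexing -/
def tq (l : ℕ) (hl : 0 < l) (t : ℕ) : Fin l := ⟨t % l, Nat.mod_lt _ hl⟩

section
variable {V : Type*} [CommRing V] {l : ℕ}

theorem fs_eq (f : Fin l × ℕ → V) (M : ℕ) (h : ∀ i m, M ≤ m → f (i, m) = 0) :
    ∑ᶠ x, f x = ∑ i, ∑ m ∈ Finset.range M, f (i, m) := by
  rw [finsum_eq_finsetSum_of_support_subset (s := Finset.univ ×ˢ Finset.range M), Finset.sum_product]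
  rintro ⟨i, m⟩ hx
  simp only [Finset.coe_product, Set.mem_prod, Finset.mem_coe, Finset.mem_univ, Finset.mem_range, true_and]
  by_contra hm
  exact hx (h i m (by omega))

theorem sup_fin (f : Fin l × ℕ → V) (M : ℕ) (h : ∀ i m, M ≤ m → f (i, m) = 0) : (support f).Finite := by
  refine (Finset.finite_toSet (Finset.univ ×ˢ Finset.range M)).subset ?_
  rintro ⟨i, m⟩ hx
  simp only [Finset.coe_product, Set.mem_prod, Finset.mem_coe, Finset.mem_univ, Finset.mem_range, true_and]
  by_contra hm
  exact hx (h i m (by omega))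

theorem wf_bd (pd : V →+ V) (N : ℕ) (K : Fin l → Fin l → ℕ → V) (n : ℕ) (j : Fin l) :
    ∀ i m, n + N + 1 ≤ m → wf pd N K n j (i, m) = 0 := by
  induction n with
  | zero => intro i m hm; simp only [wf]; rw [if_neg (by omega)]
  | succ n ih =>
    intro i m hm
    obtain ⟨m, rfl⟩ : ∃ q, m = q + 1 := ⟨m - 1, by omega⟩
    simp only [wf, opT, sh]
    rw [ih i _ (by omega), ih i _ (by omega)]; simp

theorem wf_top (pd : V →+ V) (N : ℕ) (K : Fin l → Fin l → ℕ → V) (n : ℕ) (j i : Fin l) :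
    wf pd N K n j (i, n + N) = K j i N := by
  induction n with
  | zero => simp [wf]
  | succ n ih =>
    rw [show n + 1 + N = (n + N) + 1 by omega]
    simp only [wf, opT, sh]
    rw [ih, wf_bd pd N K n j i _ (by omega)]; simp

theorem wf_Q (pd : V →+ V) (N : ℕ) (K : Fin l → Fin l → ℕ → V) (Q : Subring V) (hQ : ∀ x ∈ Q, pd x ∈ Q)
    (hK : ∀ i j m, K i j m ∈ Q) (n : ℕ) (j : Fin l) : ∀ x, wf pd N K n j x ∈ Q := by
  induction n with
  | zero => intro x; simp only [wf]; split_ifs; exact hK _ _ _; exact Q.zero_mem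
  | succ n ih =>
    rintro ⟨i, m⟩
    cases m with
    | zero => simp only [wf, opT, sh, add_zero]; exact hQ _ (ih _)
    | succ m => exact Q.add_mem (hQ _ (ih _)) (ih _)

theorem pair_opT (pd : V →+ V) (hd : ∀ x y, pd (x * y) = pd x * y + x * pd y)
    (e : Fin l × ℕ → V) (he : ∀ i m, e (i, m + 1) = pd (e (i, m)))
    (g : Fin l × ℕ → V) (M : ℕ) (hg : ∀ i m, M ≤ m → g (i, m) = 0) :
    ∑ᶠ x, opT pd g x * e x = pd (∑ᶠ x, g x * e x) := by
  rw [fs_eq _ (M + 1), fs_eq _ (M + 1)]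
  · simp only [map_sum, hd, opT, add_mul, Finset.sum_add_distrib]
    congr 1
    refine Finset.sum_congr rfl fun i _ => ?_
    rw [Finset.sum_range_succ', Finset.sum_range_succ, hg i M le_rfl]
    simp [sh, he]
  · intro i m hm; rw [hg i m (by omega), zero_mul]
  · intro i m hm
    obtain ⟨m, rfl⟩ : ∃ q, m = q + 1 := ⟨m - 1, by omega⟩
    simp only [opT, sh]
    rw [hg i _ (by omega), hg i _ (by omega)]; simp

theorem inv_of_bij {I J : Type*} [DecidableEq I] [DecidableEq J] (φ : J → I →₀ V)
    (h : Bijective (Finsupp.linearCombination V φ)) :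
    ∃ ψ : I → J →₀ V, (∀ j j', ∑ᶠ x, φ j x * ψ x j' = if j = j' then 1 else 0) ∧
      (∀ x x', ∑ᶠ j, ψ x j * φ j x' = if x = x' then 1 else 0) := by
  let e := LinearEquiv.ofBijective _ h
  refine ⟨fun x => e.symm (Finsupp.single x 1), fun j j' => ?_, fun x x' => ?_⟩
  · have h1 : e.symm (φ j) = Finsupp.single j 1 := by
      rw [LinearEquiv.symm_apply_eq]
      simp [e]
    have h2 : φ j = ∑ x ∈ (φ j).support, φ j x • Finsupp.single x 1 := by
      conv_lhs => rw [← Finsupp.sum_single (φ j)]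
      simp [Finsupp.sum]
    have h3 := congrArg (fun f => f j') h1
    simp only [Finsupp.single_apply] at h3
    rw [← h3]
    conv_rhs => rw [h2]
    rw [map_sum, Finsupp.finsetSum_apply]
    rw [finsum_eq_finsetSum_of_support_subset (s := (φ j).support)]
    · simp only [map_smul, Finsupp.smul_apply, smul_eq_mul]
    · intro x hx
      simp only [Finset.mem_coe, Finsupp.mem_support_iff]
      intro h0; exact hx (by simp [h0])
  · have h1 : e (e.symm (Finsupp.single x 1)) = Finsupp.single x 1 := by simp
    have h3 := congrArg (fun f => f x') h1
    simp only [Finsupp.single_apply] at h3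
    rw [← h3]
    show ∑ᶠ j, e.symm (Finsupp.single x 1) j * φ j x' = _
    generalize e.symm (Finsupp.single x 1) = f
    simp only [e, LinearEquiv.ofBijective_apply, Finsupp.linearCombination_apply, Finsupp.sum, Finsupp.finsetSum_apply]
    rw [finsum_eq_finsetSum_of_support_subset (s := f.support)]
    · simp
    · intro x hx
      simp only [Finset.mem_coe, Finsupp.mem_support_iff]
      intro h0; exact hx (by simp [h0])

theorem pair_phi (pd : V →+ V) (hd : ∀ x y, pd (x * y) = pd x * y + x * pd y) (N : ℕ)
    (K : Fin l → Fin l → ℕ → V) (z : Fin (N * l) → Fin l → V) (Y : Fin (N * l) → Fin l → ℕ → V)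
    (hz : ∀ a j, ∑ i, ∑ m ∈ Finset.range (N + 1), K j i m * pd^[m] (z a i) = 0)
    (hA : ∀ a b, ∑ i, ∑ m ∈ Finset.range N, Y a i m * pd^[m] (z b i) = if a = b then 1 else 0)
    (φ : (ℕ × Fin l) ⊕ Fin (N * l) → Fin l × ℕ → V)
    (h1 : ∀ n j x, φ (Sum.inl (n, j)) x = wf pd N K n j x)
    (h2 : ∀ a i m, φ (Sum.inr a) (i, m) = if m < N then Y a i m else 0) (j) (b : Fin (N * l)) :
    ∑ᶠ x, φ j x * pd^[x.2] (z b x.1) = if j = Sum.inr b then 1 else 0 := by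
  rcases j with ⟨n, j⟩ | a
  · simp only [reduceCtorEq, if_false, h1]
    induction n with
    | zero =>
      rw [fs_eq _ (N + 1), ← hz b j]
      · refine Finset.sum_congr rfl fun i _ => Finset.sum_congr rfl fun m hm => ?_
        rw [Finset.mem_range] at hm
        simp only [wf]
        rw [if_pos (by omega)]
      · intro i m hm
        simp only [wf]
        rw [if_neg (by omega), zero_mul]
    | succ n ih =>
      simp only [wf]
      rw [pair_opT pd hd (fun x => pd^[x.2] (z b x.1)) (fun i m => iterate_succ_apply' _ _ _) _ _
        (wf_bd pd N K n j), ih, map_zero]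
  · rw [fs_eq _ N]
    · simp only [Sum.inr.injEq, ← hA]
      refine Finset.sum_congr rfl fun i _ => Finset.sum_congr rfl fun m hm => ?_
      rw [Finset.mem_range] at hm
      rw [h2, if_pos hm]
    · intro i m hm
      rw [h2, if_neg (by omega), zero_mul]

theorem phi_surj (pd : V →+ V) (N : ℕ)
    (K : Fin l → Fin l → ℕ → V) (z : Fin (N * l) → Fin l → V) (Y : Fin (N * l) → Fin l → ℕ → V)
    (Ki : Fin l → Fin l → V) (hKi : ∀ i j, ∑ r, Ki i r * K r j N = if i = j then 1 else 0)
    (hB : ∀ i m i' m', m < N → m' < N → ∑ a, pd^[m] (z a i) * Y a i' m' =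
        if i = i' ∧ m = m' then 1 else 0)
    (φ : (ℕ × Fin l) ⊕ Fin (N * l) → Fin l × ℕ →₀ V)
    (h1 : ∀ n j x, φ (Sum.inl (n, j)) x = wf pd N K n j x)
    (h2 : ∀ a i m, φ (Sum.inr a) (i, m) = if m < N then Y a i m else 0) :
    Surjective (Finsupp.linearCombination V φ) := by
  set R := LinearMap.range (Finsupp.linearCombination V φ) with hR
  have hφ : ∀ j, φ j ∈ R := fun j => ⟨Finsupp.single j 1, by simp⟩
  have hx : ∀ m i, Finsupp.single (i, m) (1 : V) ∈ R := by
    intro m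
    induction m using Nat.strong_induction_on with
    | _ m ih =>
      intro i
      by_cases hm : m < N
      · have : Finsupp.single (i, m) (1 : V) = ∑ a, pd^[m] (z a i) • φ (Sum.inr a) := by
          ext ⟨i', m'⟩
          simp only [Finsupp.finsetSum_apply, Finsupp.smul_apply, smul_eq_mul, h2, Finsupp.single_apply, Prod.mk.injEq]
          by_cases hm' : m' < N
          · simp only [if_pos hm', hB i m i' m' hm hm']
          · simp only [if_neg hm', mul_zero, Finset.sum_const_zero]
            rw [if_neg]; omega
        rw [this]
        exact R.sum_mem fun a _ => R.smul_mem _ (hφ _)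
      · obtain ⟨n, rfl⟩ : ∃ n, m = n + N := ⟨m - N, by omega⟩
        set q := Finsupp.single (i, n + N) (1 : V) - ∑ j, Ki i j • φ (Sum.inl (n, j)) with hq
        have hq0 : ∀ i' m', n + N ≤ m' → q (i', m') = 0 := by
          intro i' m' hm'
          simp only [hq, Finsupp.sub_apply, Finsupp.finsetSum_apply, Finsupp.smul_apply, smul_eq_mul, h1, Finsupp.single_apply, Prod.mk.injEq]
          rcases hm'.eq_or_lt with rfl | hlt
          · simp [wf_top, hKi]
          · have : ∀ j, wf pd N K n j (i', m') = 0 := fun j => wf_bd pd N K n j i' m' (by omega)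
            simp only [this, mul_zero, Finset.sum_const_zero]
            rw [if_neg (by omega)]; simp
        have hqR : q ∈ R := by
          rw [← Finsupp.sum_single q]
          refine R.sum_mem fun x hx => ?_
          obtain ⟨i', m'⟩ := x
          have hlt : m' < n + N := by
            by_contra hc
            exact (Finsupp.mem_support_iff.1 hx) (hq0 i' m' (by omega))
          have := R.smul_mem (q (i', m')) (ih m' hlt i')
          rwa [Finsupp.smul_single, smul_eq_mul, mul_one] at this
        have : Finsupp.single (i, n + N) (1 : V) = q + ∑ j, Ki i j • φ (Sum.inl (n, j)) := by rw [hq]; abel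
        rw [this]
        exact R.add_mem hqR (R.sum_mem fun a _ => R.smul_mem _ (hφ _))
  rw [← LinearMap.range_eq_top, eq_top_iff]
  intro f _
  rw [← Finsupp.sum_single f]
  refine R.sum_mem fun x _ => ?_
  have := R.smul_mem (f x) (hx x.2 x.1)
  rwa [Finsupp.smul_single, smul_eq_mul, mul_one] at this

theorem phi_inj (pd : V →+ V) (hd : ∀ x y, pd (x * y) = pd x * y + x * pd y) (N : ℕ)
    (K : Fin l → Fin l → ℕ → V) (z : Fin (N * l) → Fin l → V) (Y : Fin (N * l) → Fin l → ℕ → V)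
    (Ki : Fin l → Fin l → V) (hKi : ∀ i j, ∑ r, K i r N * Ki r j = if i = j then 1 else 0)
    (hz : ∀ a j, ∑ i, ∑ m ∈ Finset.range (N + 1), K j i m * pd^[m] (z a i) = 0)
    (hA : ∀ a b, ∑ i, ∑ m ∈ Finset.range N, Y a i m * pd^[m] (z b i) = if a = b then 1 else 0)
    (φ : (ℕ × Fin l) ⊕ Fin (N * l) → Fin l × ℕ →₀ V)
    (h1 : ∀ n j x, φ (Sum.inl (n, j)) x = wf pd N K n j x)
    (h2 : ∀ a i m, φ (Sum.inr a) (i, m) = if m < N then Y a i m else 0) :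
    Injective (Finsupp.linearCombination V φ) := by
  rw [injective_iff_map_eq_zero]
  intro c hc
  have hE : ∀ b, c (Sum.inr b) = 0 := by
    intro b
    let ev : (Fin l × ℕ →₀ V) →ₗ[V] V := Finsupp.linearCombination V (fun x : Fin l × ℕ => pd^[x.2] (z b x.1))
    have he : ∀ j, ev (φ j) = if j = Sum.inr b then 1 else 0 := by
      intro j
      rw [← pair_phi pd hd N K z Y hz hA (fun j => φ j) h1 h2 j b]
      simp only [ev, Finsupp.linearCombination_apply, Finsupp.sum, smul_eq_mul]
      rw [finsum_eq_finsetSum_of_support_subset]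
      intro x hx
      simp only [Finset.mem_coe, Finsupp.mem_support_iff]
      intro h0; exact hx (by simp [h0])
    have := congrArg ev hc
    clear_value ev
    rw [Finsupp.linearCombination_apply, Finsupp.sum, map_sum, map_zero] at this
    simp only [map_smul, he, smul_eq_mul, mul_ite, mul_one, mul_zero, Finset.sum_ite_eq'] at this
    by_contra hne
    rw [if_pos (by simpa using hne)] at this
    exact hne this
  have hL : ∀ n, (∀ n' j, n ≤ n' → c (Sum.inl (n', j)) = 0) → ∀ n' j, c (Sum.inl (n', j)) = 0 := by
    intro n
    induction n with
    | zero => intro h n' j; exact h n' j (Nat.zero_le _)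
    | succ n ih =>
      intro h
      refine ih fun n' j hn' => ?_
      rcases hn'.eq_or_lt with rfl | hlt
      swap
      · exact h n' j hlt
      have key : ∀ i, ∑ r, c (Sum.inl (n, r)) * K r i N = 0 := by
        intro i
        have := DFunLike.congr_fun hc (i, n + N)
        rw [Finsupp.linearCombination_apply, Finsupp.sum, Finsupp.finsetSum_apply, Finsupp.zero_apply] at this
        rw [← this]
        classical
        rw [← Finset.sum_subset (s₁ := Finset.univ.image (fun r : Fin l => (Sum.inl (n, r) : (ℕ × Fin l) ⊕ Fin (N * l))) ∩ c.support) Finset.inter_subset_right]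
        · rw [Finset.sum_subset (s₂ := Finset.univ.image (fun r : Fin l => (Sum.inl (n, r) : (ℕ × Fin l) ⊕ Fin (N * l)))) Finset.inter_subset_left, Finset.sum_image]
          · simp only [Finsupp.smul_apply, smul_eq_mul, h1, wf_top]
          · intro a _ b _ hab; simpa using hab
          · intro x hx hx'
            have : c x = 0 := by
              by_contra h0
              exact hx' (Finset.mem_inter.2 ⟨hx, by simpa using h0⟩)
            simp [this]
        · intro x hx hx'
          rcases x with ⟨n', r⟩ | b
          · by_cases hn : n' = n
            · subst hn
              exact (hx' (Finset.mem_inter.2 ⟨by simp, hx⟩)).elim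
            · by_cases hlt : n < n'
              · rw [h n' r hlt]; simp
              · rw [Finsupp.smul_apply, h1, wf_bd pd N K n' r i _ (by omega)]; simp
          · rw [hE b]; simp
      have : ∑ i, (∑ r, c (Sum.inl (n, r)) * K r i N) * Ki i j = 0 := by simp [key]
      simp only [Finset.sum_mul] at this
      rw [Finset.sum_comm] at this
      simp only [mul_assoc, ← Finset.mul_sum, hKi] at this
      simpa using this
  ext j
  rcases j with ⟨n, j⟩ | b
  · refine hL (c.support.sup (fun x => Sum.elim (fun p => p.1 + 1) (fun _ => 0) x)) (fun n' j hn' => ?_) n j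
    by_contra h0
    have := Finset.le_sup (f := fun x : (ℕ × Fin l) ⊕ Fin (N * l) => Sum.elim (fun p => p.1 + 1) (fun _ => 0) x) (Finsupp.mem_support_iff.2 h0)
    simp only [Sum.elim_inl] at this
    omega
  · exact hE b

/-- the equivalence `ℕ ≃ ℕ × Fin l` -/
def dme (l : ℕ) (hl : 0 < l) : ℕ ≃ ℕ × Fin l where
  toFun t := (t / l, ⟨t % l, Nat.mod_lt _ hl⟩)
  invFun p := p.1 * l + p.2
  left_inv t := Nat.div_add_mod' t l
  right_inv p := by
    obtain ⟨n, i, hi⟩ := p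
    have h1 : (n * l + i) / l = n := by
      rw [mul_comm, Nat.mul_add_div hl, Nat.div_eq_of_lt hi]; rfl
    have h2 : (n * l + i) % l = i := by
      rw [mul_comm, Nat.mul_add_mod, Nat.mod_eq_of_lt hi]
    simp [h1, h2]

/-- `w` in linear indexing -/
def wl (pd : V →+ V) (N : ℕ) (K : Fin l → Fin l → ℕ → V) (hl : 0 < l) (t : ℕ) : Fin l × ℕ → V :=
  wf pd N K (dme l hl t).1 (dme l hl t).2

theorem wl_add (pd : V →+ V) (N : ℕ) (K : Fin l → Fin l → ℕ → V) (hl : 0 < l) (t : ℕ) :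
    wl pd N K hl (t + l) = opT pd (wl pd N K hl t) := by
  simp only [wl, dme, Equiv.coe_fn_mk]
  rw [Nat.add_div_right _ hl]
  simp [wf]

theorem exists_basis [Nontrivial V] (pd : V →+ V)
    (hd : ∀ x y, pd (x * y) = pd x * y + x * pd y) (Q : Subring V) (hQ : ∀ x ∈ Q, pd x ∈ Q)
    (hlc : ∀ (M : ℕ) (a : ℕ → V), (∀ n, a n ∈ Q) → a M ≠ 0 →
      (∀ b ∈ Q, ∃ u ∈ Q, ∑ n ∈ Finset.range (M + 1), a n * pd^[n] u = b) ∧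
      (1 ≤ M → ∃ u ∈ Q, u ≠ 0 ∧ ∑ n ∈ Finset.range (M + 1), a n * pd^[n] u = 0))
    (hl : 0 < l) (N : ℕ) (K : Fin l → Fin l → ℕ → V) (hKQ : ∀ i j m, K i j m ∈ Q)
    (hK : IsUnit (Matrix.of fun i j : Fin l => K i j N)) :
    ∃ (φ : ℕ ⊕ Fin (N * l) → Fin l × ℕ → V) (ψ : Fin l × ℕ → ℕ ⊕ Fin (N * l) → V)
      (ε : Fin l × ℕ → Fin (N * l) → V),
      (∀ t, φ (Sum.inl t) = wl pd N K hl t) ∧ (∀ j, (support (φ j)).Finite) ∧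
      (∀ x, (support (ψ x)).Finite) ∧ (∀ j x, φ j x ∈ Q) ∧ 
      (∀ i m a, ε (i, m + 1) a = pd (ε (i, m) a)) ∧
      (∀ j a, ∑ᶠ x, φ j x * ε x a = if j = Sum.inr a then 1 else 0) ∧
      (∀ j j', ∑ᶠ x, φ j x * ψ x j' = if j = j' then 1 else 0) ∧
      (∀ x x', ∑ᶠ j, ψ x j * φ j x' = if x = x' then 1 else 0) := by
  obtain ⟨z, Y, Ki, hzQ, hYQ, hKiQ, hK1, hK2, hz, hA, hB⟩ := exists_fund pd hd Q hQ hlc l N K hKQ hK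
  let φ0 : (ℕ × Fin l) ⊕ Fin (N * l) → Fin l × ℕ → V :=
    Sum.elim (fun p => wf pd N K p.1 p.2) (fun a x => if x.2 < N then Y a x.1 x.2 else 0)
  have hf : ∀ j, (support (φ0 j)).Finite := by
    rintro (⟨n, j⟩ | a)
    · exact sup_fin _ _ (wf_bd pd N K n j)
    · exact sup_fin _ N (fun i m hm => if_neg (by simpa using hm))
  have hφQ : ∀ j x, φ0 j x ∈ Q := by
    rintro (⟨n, j⟩ | a) x
    · exact wf_Q pd N K Q hQ hKQ n j x
    · simp only [φ0, Sum.elim_inr]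
      split_ifs
      exacts [hYQ _ _ _, Q.zero_mem]
  let φ' : (ℕ × Fin l) ⊕ Fin (N * l) → Fin l × ℕ →₀ V := fun j => Finsupp.ofSupportFinite (φ0 j) (hf j)
  have hφ' : ∀ j x, φ' j x = φ0 j x := fun _ _ => rfl
  obtain ⟨ψ, p1, p2⟩ := inv_of_bij φ' ⟨phi_inj pd hd N K z Y Ki hK2 hz hA φ' (fun _ _ _ => rfl) (fun _ _ _ => rfl),
    phi_surj pd N K z Y Ki hK1 hB φ' (fun _ _ _ => rfl) (fun _ _ _ => rfl)⟩
  let e : ℕ ⊕ Fin (N * l) ≃ (ℕ × Fin l) ⊕ Fin (N * l) := Equiv.sumCongr (dme l hl) (Equiv.refl _)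
  refine ⟨fun j => φ0 (e j), fun x j => ψ x (e j), fun x b => pd^[x.2] (z b x.1), fun t => rfl,
    fun j => hf _, fun x => ?_, fun j x => hφQ _ x, fun i m a => iterate_succ_apply' _ _ _, ?_, ?_, ?_⟩
  · exact (ψ x).hasFiniteSupport.preimage e.injective.injOn
  · intro j a
    rw [pair_phi pd hd N K z Y hz hA φ0 (fun _ _ _ => rfl) (fun _ _ _ => rfl)]
    have : e j = Sum.inr a ↔ j = Sum.inr a := by rcases j with t | b <;> simp [e]
    simp only [this]
  · intro j j'
    have := p1 (e j) (e j')
    simpa only [hφ', e.injective.eq_iff] using this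
  · intro x x'
    rw [← p2 x x']
    exact finsum_comp_equiv e (f := fun j => ψ x j * φ' j x')

end
end S19


namespace S19

open Function Equiv

/-- all the data -/
structure Sys (V : Type*) [CommRing V] (l : ℕ) (E : Type) [DecidableEq E] where
  hl : 0 < l
  pd : V →+ V
  D : ℕ → V →+ V
  φ : ℕ ⊕ E → Fin l × ℕ → V
  ψ : Fin l × ℕ → ℕ ⊕ E → V
  ε : Fin l × ℕ → E → V
  pd_mul : ∀ x y, pd (x * y) = pd x * y + x * pd y
  D_mul : ∀ t x y, D t (x * y) = D t x * y + x * D t y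
  D_comm : ∀ s t f, D s (D t f) = D t (D s f)
  D_norm : ∀ t f, (∀ s, t < s → D s f = 0) → ∃ g, (∀ s, t < s → D s g = 0) ∧ D t g = f
  D_fin : ∀ f, ∃ T, ∀ t, T ≤ t → D t f = 0
  D_pd : ∀ t f, D (t + l) (pd f) = pd (D (t + l) f) + D t f
  D_pd0 : ∀ t f, t < l → D t (pd f) = pd (D t f)
  φ_succ : ∀ t, φ (Sum.inl (t + l)) = opT pd (φ (Sum.inl t))
  φ_fin : ∀ j, (support (φ j)).Finite
  ψ_fin : ∀ x, (support (ψ x)).Finite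
  φ_Q : ∀ t j x, D t (φ j x) = 0
  ε_succ : ∀ i m a, ε (i, m + 1) a = pd (ε (i, m) a)
  φε : ∀ j a, ∑ᶠ x, φ j x * ε x a = if j = Sum.inr a then 1 else 0
  φψ : ∀ j j', ∑ᶠ x, φ j x * ψ x j' = if j = j' then 1 else 0
  ψφ : ∀ x x', ∑ᶠ j, ψ x j * φ j x' = if x = x' then 1 else 0
  pd_surj : ∀ q, (∀ t, D t q = 0) → ∃ u, (∀ t, D t u = 0) ∧ pd u = q

theorem fsum_inj {A B V : Type*} [AddCommMonoid V] (g : A → B) (hg : Injective g) (f : B → V)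
    (h : ∀ b, b ∉ Set.range g → f b = 0) : ∑ᶠ b, f b = ∑ᶠ a, f (g a) := by
  rw [← finsum_mem_range hg, ← finsum_mem_univ]
  refine finsum_mem_inter_support_eq' _ _ _ fun x hx => ?_
  simp only [Set.mem_univ, true_iff]
  by_contra h0
  exact hx (h x h0)

theorem act_perm {V I J : Type*} [CommRing V] {k : ℕ} (M : J → I → V) (f : (Fin k → J) → V) (σ : Perm (Fin k)) (x) :
    act M (fun j => f (j ∘ σ)) x = act M f (x ∘ σ) := by
  unfold act
  rw [← finsum_comp_equiv (Equiv.arrowCongr σ (Equiv.refl J)).symm (f := fun j => f j * ∏ a, M (j a) ((x ∘ σ) a))]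
  refine finsum_congr fun j => ?_
  have h1 : (Equiv.arrowCongr σ (Equiv.refl J)).symm j = j ∘ σ := by funext a; simp
  rw [h1, ← Equiv.prod_comp σ (fun a => M (j a) (x a))]
  rfl

theorem act_zsmul {V I J : Type*} [CommRing V] {k : ℕ} (M : J → I → V) (f : (Fin k → J) → V)
    (hf : (support f).Finite) (n : ℤ) :
    act M (fun j => n • f j) = fun x => n • act M f x := by
  have := act_smul M (n : V) f hf
  simpa only [zsmul_eq_mul] using this

theorem act_exd {V I J : Type*} [CommRing V] {k : ℕ} (M : J → I → V) (f : (Fin (k + 1) → J) → V)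
    (hf : (support f).Finite) : act M (exd f) = exd (act M f) := by
  classical
  funext x
  have hp : ∀ σ : Perm (Fin (k+1)), (support fun j => f (j ∘ σ)).Finite := fun σ =>
    hf.preimage (f := fun j => j ∘ σ) (fun a _ b _ h => by
      funext i; have := congrFun h (σ.symm i); simpa using this)
  have hs : ∀ s : Finset (Fin (k + 1)), (support fun j => ∑ α ∈ s, (-1 : ℤ) ^ (α : ℕ) • f (j ∘ α.cycleRange.symm)).Finite ∧
      act M (fun j => ∑ α ∈ s, (-1 : ℤ) ^ (α : ℕ) • f (j ∘ α.cycleRange.symm)) x =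
      ∑ α ∈ s, (-1 : ℤ) ^ (α : ℕ) • act M f (x ∘ α.cycleRange.symm) := by
    intro s
    induction s using Finset.induction_on with
    | empty =>
      simp only [Finset.sum_empty]
      refine ⟨by simp, ?_⟩
      exact congrFun (act_zero M) x
    | insert a s ha ih =>
      simp only [Finset.sum_insert ha]
      have h1 : (support fun j => (-1 : ℤ) ^ (a : ℕ) • f (j ∘ a.cycleRange.symm)).Finite :=
        (hp a.cycleRange.symm).subset fun j hj h0 => hj (by
          simp only [] at h0 ⊢
          rw [h0, smul_zero])
      constructor
      · exact (h1.union ih.1).subset (support_add _ _)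
      · have := congrFun (act_add M _ _ h1 ih.1) x
        rw [← ih.2, ← act_perm, ← congrFun (act_zsmul M _ (hp _) _) x]
        exact this
  exact (hs Finset.univ).2

/-- `d` of an element -/
noncomputable def dv {V : Type*} [CommRing V] {l : ℕ} {E : Type} [DecidableEq E] (S : Sys V l E) (f : V) (y : Fin l × ℕ) : V :=
  ∑ᶠ t, S.D t f * S.φ (Sum.inl t) y

/-- the differential -/
noncomputable def del {V : Type*} [CommRing V] {l : ℕ} {E : Type} [DecidableEq E] (S : Sys V l E) {k : ℕ} (P : (Fin k → Fin l × ℕ) → V) :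
    (Fin (k + 1) → Fin l × ℕ) → V :=
  exd (fun x => dv S (P (Fin.tail x)) (x 0))

/-- the total derivative -/
def par {V : Type*} [CommRing V] {l : ℕ} (pd : V →+ V) {k : ℕ} (P : (Fin k → Fin l × ℕ) → V) :
    (Fin k → Fin l × ℕ) → V :=
  fun x => pd (P x) + ∑ a, sh (fun y => P (update x a y)) (x a)

section
variable {V : Type*} [CommRing V] {l : ℕ} {E : Type} [DecidableEq E] (S : Sys V l E) {k : ℕ}

theorem cj {c : (Fin k → ℕ ⊕ E) → V} (hc : (support c).Finite) : act S.ψ (act S.φ c) = c := by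
  rw [act_act _ _ S.φ_fin c hc]
  simp only [S.φψ]
  exact act_proj id c

theorem ic {P : (Fin k → Fin l × ℕ) → V} (hP : (support P).Finite) : act S.φ (act S.ψ P) = P := by
  rw [act_act _ _ S.ψ_fin P hP]
  simp only [S.ψφ]
  exact act_proj id P

theorem ev_act {c : (Fin k → ℕ ⊕ E) → V} (hc : (support c).Finite) :
    act S.ε (act S.φ c) = fun a => c (Sum.inr ∘ a) := by
  rw [act_act _ _ S.φ_fin c hc]
  simp only [S.φε]
  exact act_proj Sum.inr c

theorem bd_fin [Finite E] {D : ℕ → V →+ V} {T : ℕ} {c : (Fin k → ℕ ⊕ E) → V} (h : Bd D T c) : (support c).Finite := by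
  have := Fintype.ofFinite E
  refine box_finite c ((Finset.range T).disjSum Finset.univ) fun j hj a => ?_
  rcases hja : j a with t | b
  · simp only [Finset.inl_mem_disjSum, Finset.mem_range]
    by_contra ht
    exact hj (h.1 j a t hja (by omega))
  · simp

theorem fin_bd {c : (Fin k → ℕ ⊕ E) → V} (hc : (support c).Finite) : ∃ T, Bd S.D T c := by
  choose T hT using S.D_fin
  obtain ⟨s, hs⟩ := exists_box c hc
  refine ⟨s.sup (Sum.elim (fun t => t + 1) (fun _ => 0)) ⊔ hc.toFinset.sup (fun j => T (c j)), ?_, ?_⟩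
  · intro j a t hj ht
    by_contra h0
    have h1 := Finset.le_sup (f := Sum.elim (fun t => t + 1) (fun _ => 0)) (hs j h0 a)
    rw [hj, Sum.elim_inl] at h1
    have := (h1.trans le_sup_left).trans ht
    omega
  · intro j t ht
    by_cases h0 : c j = 0
    · rw [h0, map_zero]
    · refine hT _ _ (le_trans ?_ (le_sup_right.trans ht))
      exact Finset.le_sup (f := fun j => T (c j)) (by simpa using h0)

theorem D_one (t) : S.D t 1 = 0 := by
  have := S.D_mul t 1 1
  simpa using this

theorem D_prod {ι : Type*} (t : ℕ) (s : Finset ι) (f : ι → V) (hf : ∀ i ∈ s, S.D t (f i) = 0) : S.D t (∏ i ∈ s, f i) = 0 := by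
  classical
  induction s using Finset.induction_on with
  | empty => simpa using D_one S t
  | insert a s ha ih =>
    rw [Finset.prod_insert ha, S.D_mul, hf a (by simp), ih fun i hi => hf i (by simp [hi])]
    simp

theorem dlf_fin {c : (Fin k → ℕ ⊕ E) → V} (hc : (support c).Finite) :
    (support fun y : Fin (k + 1) → ℕ ⊕ E => DJ S.D (y 0) (c (Fin.tail y))).Finite := by
  classical
  obtain ⟨T, hT⟩ := fin_bd S hc
  obtain ⟨s, hs⟩ := exists_box c hc
  refine box_finite _ (s ∪ (Finset.range T).image Sum.inl) fun j hj a => ?_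
  refine Fin.cases ?_ (fun b => ?_) a
  · refine Finset.mem_union_right _ ?_
    rcases h0 : j 0 with t | b
    · simp only [Finset.mem_image, Finset.mem_range, Sum.inl.injEq, exists_eq_right]
      by_contra ht
      refine hj ?_
      rw [h0]
      exact hT.2 _ t (by omega)
    · exact (hj (by rw [h0]; rfl)).elim
  · refine Finset.mem_union_left _ (hs (Fin.tail j) (fun h0 => hj ?_) b)
    rw [h0, DJ_zero]

theorem act_dl {c : (Fin k → ℕ ⊕ E) → V} (hc : (support c).Finite) :
    act S.φ (dl S.D c) = del S (act S.φ c) := by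
  unfold dl del
  have hf := dlf_fin S hc
  rw [act_exd _ _ hf]
  congr 1
  funext x
  unfold act
  have e1 := finsum_comp_equiv (Fin.consEquiv (fun _ : Fin (k+1) => ℕ ⊕ E))
    (f := fun j => DJ S.D (j 0) (c (Fin.tail j)) * ∏ a, S.φ (j a) (x a))
  rw [← e1, finsum_curry]
  · rw [fsum_inj Sum.inl Sum.inl_injective]
    · unfold dv
      refine finsum_congr fun t => ?_
      rw [AddMonoidHom.map_finsum, finsum_mul']
      · refine finsum_congr fun j => ?_
        simp only [Fin.consEquiv, Equiv.coe_fn_mk, Fin.cons_zero, Fin.tail_cons, Fin.prod_univ_succ, Fin.cons_succ, DJ, Sum.elim_inl]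
        rw [S.D_mul, D_prod S t _ _ fun i _ => S.φ_Q _ _ _]
        simp only [Fin.tail]
        ring
      · refine hc.subset fun j hj h0 => hj ?_
        simp only []
        rw [h0]; simp
      · refine hc.subset fun j hj h0 => hj ?_
        simp only []
        rw [h0]; simp
    · rintro (t | b) hb
      · exact (hb ⟨t, rfl⟩).elim
      · simp [Fin.consEquiv, DJ]
  · refine (hf.preimage (Fin.consEquiv (fun _ : Fin (k+1) => ℕ ⊕ E)).injective.injOn).subset fun j hj h0 => hj ?_
    beta_reduce at h0 ⊢
    rw [h0, zero_mul]

end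
end S19


namespace S19

open Function Equiv

section
variable {V : Type*} [CommRing V] {l : ℕ} {k : ℕ}

theorem sh_add (f g : Fin l × ℕ → V) (x) : sh (fun y => f y + g y) x = sh f x + sh g x := by
  obtain ⟨i, m⟩ := x
  cases m <;> simp [sh]

theorem sh_map (h : V → V) (h0 : h 0 = 0) (f : Fin l × ℕ → V) (x) : sh (fun y => h (f y)) x = h (sh f x) := by
  obtain ⟨i, m⟩ := x
  cases m <;> simp [sh, h0]

theorem par_add (pd : V →+ V) (P R : (Fin k → Fin l × ℕ) → V) : par pd (P + R) = par pd P + par pd R := by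
  funext x
  simp only [par, Pi.add_apply, map_add, sh_add, Finset.sum_add_distrib]
  ring

theorem par_zero (pd : V →+ V) : par pd (0 : (Fin k → Fin l × ℕ) → V) = 0 := by
  have := par_add pd (0 : (Fin k → Fin l × ℕ) → V) 0
  simpa using this

theorem par_sub (pd : V →+ V) (P R : (Fin k → Fin l × ℕ) → V) : par pd (P - R) = par pd P - par pd R := by
  have := par_add pd (P - R) R
  rw [sub_add_cancel] at this
  rw [this, add_sub_cancel_right]

theorem par_zsmul (pd : V →+ V) (n : ℤ) (P : (Fin k → Fin l × ℕ) → V) (x) :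
    par pd (fun y => n • P y) x = n • par pd P x := by
  simp only [par, map_zsmul, smul_add, Finset.smul_sum]
  congr 1
  refine Finset.sum_congr rfl fun a _ => ?_
  exact sh_map (fun v => n • v) (smul_zero n) _ _

theorem par_perm (pd : V →+ V) (P : (Fin k → Fin l × ℕ) → V) (σ : Perm (Fin k)) (x) :
    par pd (fun y => P (y ∘ σ)) x = par pd P (x ∘ σ) := by
  simp only [par]
  congr 1
  rw [← Equiv.sum_comp σ]
  refine Finset.sum_congr rfl fun a _ => ?_
  simp only [Function.comp_apply]
  congr 1
  funext y
  congr 1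
  funext b
  by_cases h : b = a
  · subst h; simp
  · simp [update_of_ne h, update_of_ne (σ.injective.ne h)]

theorem par_sk (pd : V →+ V) {P : (Fin k → Fin l × ℕ) → V} (hP : Sk P) : Sk (par pd P) := by
  intro σ x
  rw [← par_perm, ← par_zsmul]
  congr 1
  funext y
  exact hP σ y

theorem par_exd (pd : V →+ V) (f : (Fin (k + 1) → Fin l × ℕ) → V) : par pd (exd f) = exd (par pd f) := by
  classical
  funext x
  have : ∀ s : Finset (Fin (k + 1)), par pd (fun y => ∑ α ∈ s, (-1 : ℤ) ^ (α : ℕ) • f (y ∘ α.cycleRange.symm)) x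
      = ∑ α ∈ s, (-1 : ℤ) ^ (α : ℕ) • par pd f (x ∘ α.cycleRange.symm) := by
    intro s
    induction s using Finset.induction_on with
    | empty => simp only [Finset.sum_empty]; exact congrFun (par_zero pd) x
    | insert a s ha ih =>
      simp only [Finset.sum_insert ha]
      rw [← ih, ← par_perm, ← par_zsmul]
      exact congrFun (par_add pd _ _) x
  exact this Finset.univ

/-- raise an index -/
def up (a : Fin k) (x : Fin k → Fin l × ℕ) : Fin k → Fin l × ℕ := update x a ((x a).1, (x a).2 + 1)

theorem up_inj (a : Fin k) : Injective (up (l := l) a) := by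
  intro x y h
  funext b
  have := congrFun h b
  by_cases hb : b = a
  · subst hb
    simp only [up, update_self, Prod.mk.injEq, add_left_inj] at this
    exact Prod.ext this.1 this.2
  · simpa [up, update_of_ne hb] using this

theorem sh_up (P : (Fin k → Fin l × ℕ) → V) (a : Fin k) (x) :
    sh (fun y => P (update (up a x) a y)) (up a x a) = P x := by
  simp [up, sh]

theorem sh_not_up (P : (Fin k → Fin l × ℕ) → V) (a : Fin k) (x) (h : x ∉ Set.range (up (l := l) a)) :
    sh (fun y => P (update x a y)) (x a) = 0 := by
  rcases hx : x a with ⟨i, m⟩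
  cases m with
  | zero => simp [sh]
  | succ m =>
    refine (h ⟨update x a (i, m), ?_⟩).elim
    simp only [up, update_self, update_idem]
    rw [← hx, update_eq_self]

theorem shP_fin {P : (Fin k → Fin l × ℕ) → V} (hP : (support P).Finite) (a : Fin k) :
    (support fun x => sh (fun y => P (update x a y)) (x a)).Finite := by
  refine (hP.image (up a)).subset fun x hx => ?_
  by_cases h : x ∈ Set.range (up (l := l) a)
  · obtain ⟨y, rfl⟩ := h
    refine ⟨y, ?_, rfl⟩
    rw [mem_support, sh_up] at hx
    exact hx
  · exact (hx (sh_not_up P a x h)).elim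

theorem par_fin (pd : V →+ V) {P : (Fin k → Fin l × ℕ) → V} (hP : (support P).Finite) : (support (par pd P)).Finite := by
  refine (hP.union (Set.finite_iUnion (shP_fin hP))).subset fun x hx => ?_
  by_contra h
  simp only [Set.mem_union, Set.mem_iUnion, not_or, not_exists, mem_support, not_not] at h
  refine hx ?_
  simp only [par]
  rw [h.1, map_zero, zero_add]
  exact Finset.sum_eq_zero fun a _ => h.2 a

theorem par_inj (pd : V →+ V) {P : (Fin (k + 1) → Fin l × ℕ) → V} (hP : (support P).Finite) (h : par pd P = 0) : P = 0 := by
  by_contra hne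
  obtain ⟨x0, hx0⟩ := Function.ne_iff.1 hne
  obtain ⟨x, hx, hmax⟩ := Finset.exists_max_image hP.toFinset
    (fun x => toLex ((∑ a, (x a).2), (x 0).2)) ⟨x0, by simpa using hx0⟩
  have hz : ∀ y : Fin (k + 1) → Fin l × ℕ, ((∑ a, (x a).2) < (∑ a, (y a).2) ∨ ((∑ a, (x a).2) = (∑ a, (y a).2) ∧ (x 0).2 < (y 0).2)) → P y = 0 := by
    intro y hy
    by_contra h0
    have := hmax y (by simpa using h0)
    rw [← not_lt, Prod.Lex.toLex_lt_toLex] at this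
    exact this hy
  have hs : ∀ (a : Fin (k + 1)) (y : Fin (k + 1) → Fin l × ℕ), ∑ b, (up a y b).2 = ∑ b, (y b).2 + 1 := by
    intro a y
    rw [← Finset.add_sum_erase _ _ (Finset.mem_univ a), ← Finset.add_sum_erase _ (fun b => (y b).2) (Finset.mem_univ a)]
    rw [Finset.sum_congr rfl (fun b hb => by rw [up, update_of_ne (Finset.ne_of_mem_erase hb)])]
    simp only [up, update_self]
    omega
  have h1 := congrFun h (up 0 x)
  simp only [par, Pi.zero_apply] at h1
  rw [hz (up 0 x) (Or.inl (by rw [hs]; omega)), map_zero, zero_add, Fin.sum_univ_succ, sh_up,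
    Finset.sum_eq_zero, add_zero] at h1
  · simp [h1] at hx
  · intro a _
    by_cases hr : up 0 x ∈ Set.range (up (l := l) a.succ)
    · obtain ⟨y, hy⟩ := hr
      rw [← hy, sh_up]
      refine hz y (Or.inr ⟨?_, ?_⟩)
      · have := hs 0 x
        rw [← hy, hs] at this
        omega
      · have := congrFun hy 0
        have h2 : up a.succ y 0 = y 0 := by
          rw [up, update_of_ne (Fin.succ_ne_zero a).symm]
        rw [← h2, this]
        simp [up]
    · exact sh_not_up _ _ _ hr

theorem pd_prod (pd : V →+ V) (hd : ∀ x y, pd (x * y) = pd x * y + x * pd y) {ι : Type*} [DecidableEq ι]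
    (s : Finset ι) (f : ι → V) :
    pd (∏ i ∈ s, f i) = ∑ a ∈ s, ∏ i ∈ s, update f a (pd (f a)) i := by
  induction s using Finset.induction_on with
  | empty =>
    have := hd 1 1
    simpa using this
  | insert b s hb ih =>
    rw [Finset.prod_insert hb, hd, ih, Finset.sum_insert hb, Finset.prod_insert hb, update_self, Finset.mul_sum]
    congr 1
    · congr 1
      refine Finset.prod_congr rfl fun i hi => ?_
      rw [update_of_ne]
      rintro rfl; exact hb hi
    · refine Finset.sum_congr rfl fun a ha => ?_
      rw [Finset.prod_insert hb, update_of_ne]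
      rintro rfl; exact hb ha

theorem ev_par (pd : V →+ V) (hd : ∀ x y, pd (x * y) = pd x * y + x * pd y) {E : Type*}
    (ε : Fin l × ℕ → E → V) (hε : ∀ i m a, ε (i, m + 1) a = pd (ε (i, m) a))
    {P : (Fin k → Fin l × ℕ) → V} (hP : (support P).Finite) (e) :
    act ε (par pd P) e = pd (act ε P e) := by
  unfold act
  rw [AddMonoidHom.map_finsum]
  swap
  · refine hP.subset fun j hj h0 => hj ?_
    beta_reduce
    rw [h0, zero_mul]
  simp only [par, hd, add_mul, Finset.sum_mul]
  rw [finsum_add_distrib, finsum_add_distrib, finsum_sum_comm]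
  · congr 1
    simp only [pd_prod pd hd, Finset.mul_sum]
    rw [finsum_sum_comm]
    · refine Finset.sum_congr rfl fun a _ => ?_
      rw [fsum_inj (up a) (up_inj a)]
      · refine finsum_congr fun x => ?_
        rw [sh_up]
        congr 1
        refine Finset.prod_congr rfl fun b _ => ?_
        by_cases hb : b = a
        · subst hb
          simp [up, hε]
        · simp [up, update_of_ne hb]
      · intro x hx
        rw [sh_not_up P a x hx, zero_mul]
    · intro a _
      refine hP.subset fun j hj h0 => hj ?_
      beta_reduce
      rw [h0, zero_mul]
  · intro a _
    refine (shP_fin hP a).subset fun j hj h0 => hj ?_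
    beta_reduce at h0 ⊢
    rw [h0, zero_mul]
  · refine hP.subset fun j hj h0 => hj ?_
    beta_reduce
    rw [h0, map_zero, zero_mul]
  · refine hP.subset fun j hj h0 => hj ?_
    beta_reduce
    rw [h0, zero_mul]
  · refine hP.subset fun j hj h0 => hj ?_
    beta_reduce
    rw [h0, map_zero, zero_mul]
  · refine (Set.finite_iUnion (shP_fin hP)).subset fun x hx => ?_
    by_contra h
    simp only [Set.mem_iUnion, not_exists, mem_support, not_not] at h
    refine hx ?_
    beta_reduce
    exact Finset.sum_eq_zero fun a _ => by rw [h a, zero_mul]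

variable {E : Type} [DecidableEq E] (S : Sys V l E)

theorem dv_sup (f : V) (y) : (support fun t => S.D t f * S.φ (Sum.inl t) y).Finite := by
  obtain ⟨T, hT⟩ := S.D_fin f
  refine (Finset.range T).finite_toSet.subset fun t ht => ?_
  simp only [Finset.mem_coe, Finset.mem_range]
  by_contra h
  exact ht (by beta_reduce; rw [hT t (by omega), zero_mul])

theorem dv_add (f g : V) (y) : dv S (f + g) y = dv S f y + dv S g y := by
  unfold dv
  simp only [map_add, add_mul]
  exact finsum_add_distrib (dv_sup S f y) (dv_sup S g y)

theorem dv_zero (y) : dv S 0 y = 0 := by simp [dv]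

theorem dv_sum {ι : Type*} (s : Finset ι) (f : ι → V) (y) : dv S (∑ i ∈ s, f i) y = ∑ i ∈ s, dv S (f i) y :=
  map_sum (AddMonoidHom.mk' (fun f => dv S f y) (fun a b => dv_add S a b y)) f s

theorem dv_pd (f : V) : dv S (S.pd f) = opT S.pd (dv S f) := by
  obtain ⟨T, hT⟩ := S.D_fin f
  funext y
  have e : ∀ (M : ℕ) (g : ℕ → V), (∀ t, M ≤ t → g t = 0) → ∑ᶠ t, g t = ∑ t ∈ Finset.range M, g t := by
    intro M g hg
    refine finsum_eq_finsetSum_of_support_subset _ fun t ht => ?_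
    simp only [Finset.mem_coe, Finset.mem_range]
    by_contra h
    exact ht (hg t (by omega))
  have e1 : ∀ y, dv S f y = ∑ t ∈ Finset.range T, S.D t f * S.φ (Sum.inl t) y := by
    intro y
    exact e T _ (fun t ht => by rw [hT t ht, zero_mul])
  have e2 : sh (dv S f) y = ∑ t ∈ Finset.range T, S.D t f * sh (S.φ (Sum.inl t)) y := by
    obtain ⟨i, m⟩ := y
    cases m with
    | zero => simp [sh]
    | succ m => simp only [sh]; exact e1 _
  have h0 : ∀ t, T ≤ t → S.pd (S.D t f) = 0 := fun t ht => by rw [hT t ht, map_zero]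
  have e3 : dv S (S.pd f) y = ∑ t ∈ Finset.range (l + T), S.D t (S.pd f) * S.φ (Sum.inl t) y := by
    refine e _ _ fun t ht => ?_
    obtain ⟨s, rfl⟩ : ∃ s, t = s + l := ⟨t - l, by omega⟩
    rw [S.D_pd, hT s (by omega), h0 _ (by omega)]; simp
  have e4 : ∑ t ∈ Finset.range T, S.pd (S.D t f) * S.φ (Sum.inl t) y = ∑ t ∈ Finset.range (l + T), S.pd (S.D t f) * S.φ (Sum.inl t) y := by
    refine Finset.sum_subset (Finset.range_mono (by omega)) fun t _ ht => ?_
    rw [h0 t (by simpa using ht), zero_mul]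
  simp only [opT]
  rw [e2, e1, e3, map_sum]
  simp only [S.pd_mul, Finset.sum_add_distrib]
  rw [e4, Finset.sum_range_add, Finset.sum_range_add, add_assoc, add_assoc]
  congr 1
  · refine Finset.sum_congr rfl fun t ht => ?_
    rw [S.D_pd0 t f (by simpa using ht)]
  · rw [← Finset.sum_add_distrib, ← Finset.sum_add_distrib]
    refine Finset.sum_congr rfl fun t _ => ?_
    rw [add_comm l t, S.D_pd, S.φ_succ]
    simp only [opT]
    ring

theorem par_del (P : (Fin k → Fin l × ℕ) → V) : del S (par S.pd P) = par S.pd (del S P) := by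
  unfold del
  rw [par_exd]
  congr 1
  funext x
  simp only [par]
  rw [dv_add, dv_pd, dv_sum, Fin.sum_univ_succ]
  simp only [opT, add_assoc]
  congr 2
  refine Finset.sum_congr rfl fun a _ => ?_
  rw [← sh_map (fun v => dv S v (x 0)) (dv_zero S _)]
  congr 1
  funext y
  rw [Fin.tail_update_succ, update_of_ne (Fin.succ_ne_zero a).symm]

end
end S19


namespace S19

open Function Equiv

/-- finitely supported skew arrays -/
def Ar {V : Type*} [CommRing V] {l k : ℕ} (P : (Fin k → Fin l × ℕ) → V) : Prop :=
  (support P).Finite ∧ Sk P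

/-- exactness -/
def Exa {V : Type*} [CommRing V] {l : ℕ} {E : Type} [DecidableEq E] (S : Sys V l E) :
    ∀ n : ℕ, ((Fin n → Fin l × ℕ) → V) → Prop
  | 0, P => P = 0
  | k + 1, P => ∃ R : (Fin k → Fin l × ℕ) → V, Ar R ∧ P = del S R

section
variable {V : Type*} [CommRing V] {l : ℕ} {E : Type} [DecidableEq E] (S : Sys V l E) {k : ℕ}

theorem Ar.add {P R : (Fin k → Fin l × ℕ) → V} (hP : Ar P) (hR : Ar R) : Ar (P + R) :=
  ⟨(hP.1.union hR.1).subset (support_add _ _), hP.2.add hR.2⟩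

theorem Ar.sub {P R : (Fin k → Fin l × ℕ) → V} (hP : Ar P) (hR : Ar R) : Ar (P - R) :=
  ⟨(hP.1.union hR.1).subset (support_sub _ _), hP.2.sub hR.2⟩

theorem Ar.par (pd : V →+ V) {P : (Fin k → Fin l × ℕ) → V} (hP : Ar P) : Ar (par pd P) :=
  ⟨par_fin pd hP.1, par_sk pd hP.2⟩

theorem act_sub {I J : Type*} (M : J → I → V) (c d : (Fin k → J) → V) (hc : (support c).Finite) (hd : (support d).Finite) :
    act M (c - d) = act M c - act M d := by
  have := act_add M (c - d) d ((hc.union hd).subset (support_sub _ _)) hd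
  rw [sub_add_cancel] at this
  rw [this, add_sub_cancel_right]

theorem del_eq {P : (Fin k → Fin l × ℕ) → V} (hP : (support P).Finite) :
    del S P = act S.φ (dl S.D (act S.ψ P)) := by
  rw [act_dl S (act_finite _ S.ψ_fin P hP), ic S hP]

theorem dl_fin [Finite E] {c : (Fin k → ℕ ⊕ E) → V} (hc : (support c).Finite) : (support (dl S.D c)).Finite := by
  obtain ⟨T, hT⟩ := fin_bd S hc
  exact bd_fin (hT.dl S.D_comm)

theorem Ar.del [Finite E] {P : (Fin k → Fin l × ℕ) → V} (hP : Ar P) : Ar (del S P) := by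
  rw [del_eq S hP.1]
  exact ⟨act_finite _ S.φ_fin _ (dl_fin S (act_finite _ S.ψ_fin P hP.1)), act_sk _ _ (dl_sk _ _ (act_sk _ _ hP.2))⟩

theorem del_del [Finite E] {P : (Fin k → Fin l × ℕ) → V} (hP : Ar P) : del S (del S P) = 0 := by
  rw [del_eq S hP.1, ← act_dl S (dl_fin S (act_finite _ S.ψ_fin P hP.1)), dl_dl, act_zero]
  exact S.D_comm

theorem del_add (P R : (Fin k → Fin l × ℕ) → V) : del S (P + R) = del S P + del S R := by
  funext x
  simp [del, exd, dv_add, Finset.sum_add_distrib]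

theorem del_zero : del S (0 : (Fin k → Fin l × ℕ) → V) = 0 := by
  have := del_add S (0 : (Fin k → Fin l × ℕ) → V) 0
  simpa using this

theorem del_sub (P R : (Fin k → Fin l × ℕ) → V) : del S (P - R) = del S P - del S R := by
  have := del_add S (P - R) R
  rw [sub_add_cancel] at this
  rw [this, add_sub_cancel_right]

theorem ev_del [Finite E] {P : (Fin k → Fin l × ℕ) → V} (hP : Ar P) : act S.ε (del S P) = 0 := by
  rw [del_eq S hP.1, ev_act S (dl_fin S (act_finite _ S.ψ_fin P hP.1))]
  funext a
  exact dl_inr _ _ a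

theorem dl_of_del [Finite E] {P : (Fin k → Fin l × ℕ) → V} (hP : Ar P) (h : del S P = 0) : dl S.D (act S.ψ P) = 0 := by
  rw [del_eq S hP.1] at h
  rw [← cj S (dl_fin S (act_finite _ S.ψ_fin P hP.1)), h, act_zero]

theorem F5 [Algebra ℚ V] [Finite E] : ∀ {k : ℕ} {P : (Fin k → Fin l × ℕ) → V} (hP : Ar P) (h : del S P = 0)
    (he : act S.ε P = 0), Exa S k P
  | 0, P, hP, h, he => by
    funext x
    have := congrFun he Fin.elim0
    rw [act_fin_zero S.ε P _ x] at this
    exact this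
  | k + 1, P, hP, h, he => by
    have hf := act_finite _ S.ψ_fin P hP.1
    obtain ⟨T, hT⟩ := fin_bd S hf
    have h0 := ev_act S hf
    rw [ic S hP.1, he] at h0
    obtain ⟨r, r1, r2, r3⟩ := poincare S.D S.D_comm S.D_norm T (act S.ψ P) (act_sk _ _ hP.2) (dl_of_del S hP h)
      (fun a => (congrFun h0 a).symm) hT
    have hr := bd_fin r2
    refine ⟨act S.φ r, ⟨act_finite _ S.φ_fin _ hr, act_sk _ _ r1⟩, ?_⟩
    rw [← act_dl S hr, ← r3, ic S hP.1]

theorem F6 [Finite E] {P : (Fin k → Fin l × ℕ) → V} (hP : Ar P) (h : del S P = 0) (t a) :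
    S.D t (act S.ε P a) = 0 := by
  have hf := act_finite _ S.ψ_fin P hP.1
  have h1 := dl_of_del S hP h
  have h0 := ev_act S hf
  rw [ic S hP.1] at h0
  rw [h0]
  have h2 := congrFun h1 (Fin.cons (Sum.inl t) (Sum.inr ∘ a))
  rw [dl_apply, Fin.sum_univ_succ] at h2
  simpa [DJ, Function.comp_def] using h2

theorem F7 [Finite E] (g : (Fin k → E) → V) (hg : Sk g) (hQ : ∀ t a, S.D t (g a) = 0) :
    ∃ P : (Fin k → Fin l × ℕ) → V, Ar P ∧ del S P = 0 ∧ act S.ε P = g := by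
  classical
  let c : (Fin k → ℕ ⊕ E) → V := fun j => if h : ∃ a : Fin k → E, j = Sum.inr ∘ a then g h.choose else 0
  have hc1 : ∀ a, c (Sum.inr ∘ a) = g a := by
    intro a
    have h : ∃ a' : Fin k → E, Sum.inr ∘ a = (Sum.inr ∘ a' : Fin k → ℕ ⊕ E) := ⟨a, rfl⟩
    have : h.choose = a := by
      have := h.choose_spec
      funext i
      have := congrFun this i
      simpa using this.symm
    simp only [c]
    rw [dif_pos h, this]
  have hc0 : ∀ j, (¬ ∃ a : Fin k → E, j = Sum.inr ∘ a) → c j = 0 := fun j hj => dif_neg hj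
  have hb : Bd S.D 0 c := by
    constructor
    · intro j a s hj _
      refine hc0 j ?_
      rintro ⟨b, rfl⟩
      simp at hj
    · intro j s _
      by_cases h : ∃ a : Fin k → E, j = Sum.inr ∘ a
      · obtain ⟨a, rfl⟩ := h
        rw [hc1, hQ]
      · rw [hc0 j h, map_zero]
  have hs : Sk c := by
    intro σ x
    by_cases h : ∃ a : Fin k → E, x = Sum.inr ∘ a
    · obtain ⟨a, rfl⟩ := h
      rw [hc1, Function.comp_assoc, hc1, hg]
    · rw [hc0 x h, hc0, smul_zero]
      rintro ⟨a, ha⟩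
      refine h ⟨a ∘ σ.symm, ?_⟩
      rw [← Function.comp_assoc, ← ha]
      funext i; simp
  have hf := bd_fin hb
  refine ⟨act S.φ c, ⟨act_finite _ S.φ_fin _ hf, act_sk _ _ hs⟩, ?_, ?_⟩
  · rw [← act_dl S hf]
    have : dl S.D c = 0 := by
      funext j
      rw [dl_apply]
      refine Finset.sum_eq_zero fun α _ => ?_
      have h0 : ∀ t v, S.D t (c v) = 0 := fun t v => hb.2 v t (Nat.zero_le _)
      rcases hα : j α with t | b
      · simp [DJ, h0]
      · simp [DJ]
    rw [this, act_zero]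
  · rw [ev_act S hf]
    funext a
    exact hc1 a

theorem F8 (f : V) (h : S.pd f = 0) (t) : S.D t f = 0 := by
  obtain ⟨T, hT⟩ := S.D_fin f
  suffices ∀ n t, T ≤ t + n → S.D t f = 0 from this T t (by omega)
  intro n
  induction n with
  | zero => intro t ht; exact hT t (by omega)
  | succ n ih =>
    intro t ht
    have := S.D_pd t f
    have hl := S.hl
    rw [h, map_zero, ih (t + l) (by omega), map_zero, zero_add] at this
    exact this.symm

theorem ev_const [Finite E] {P : (Fin k → Fin l × ℕ) → V} {Q : (Fin (k + 1) → Fin l × ℕ) → V} (hP : Ar P) (hQ : Ar Q)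
    (h : del S P = par S.pd Q) : del S Q = 0 ∧ ∀ a, S.pd (act S.ε Q a) = 0 := by
  constructor
  · refine par_inj S.pd (hQ.del S).1 ?_
    rw [← par_del, ← h, del_del S hP]
  · intro a
    rw [← ev_par S.pd S.pd_mul S.ε S.ε_succ hQ.1, ← h, ev_del S hP]
    rfl

theorem uniq_lem {Q Q' : (Fin (k + 1) → Fin l × ℕ) → V} (hQ : Ar Q) (hQ' : Ar Q')
    (h : par S.pd Q = par S.pd Q') : Q = Q' := by
  rw [← sub_eq_zero]
  refine par_inj S.pd (hQ.sub hQ').1 ?_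
  rw [par_sub, h, sub_self]

theorem ker_lem [Algebra ℚ V] [Finite E] {P : (Fin k → Fin l × ℕ) → V} {Q : (Fin (k + 1) → Fin l × ℕ) → V} (hP : Ar P) (hQ : Ar Q)
    (h : del S P = par S.pd Q) (he : act S.ε Q = 0) : ∃ R, Ar R ∧ Exa S k (P - par S.pd R) := by
  obtain ⟨R, hR, hQR⟩ := F5 S hQ (ev_const S hP hQ h).1 he
  have hP1 := hP.sub (hR.par S.pd)
  have h1 : del S (P - par S.pd R) = 0 := by
    rw [del_sub, par_del, ← hQR, h, sub_self]
  choose! u hu1 hu2 using fun a => S.pd_surj (act S.ε (P - par S.pd R) a) (fun t => F6 S hP1 h1 t a)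
  obtain ⟨s, hs, hs1, hs2⟩ := F7 S (asym u) (asym_sk u) (fun t a => by
    rw [asym_map]; exact asym_eq_zero _ _ fun σ => hu1 _ t)
  refine ⟨R + s, hR.add hs, ?_⟩
  have e : P - par S.pd (R + s) = (P - par S.pd R) - par S.pd s := by rw [par_add]; abel
  rw [e]
  refine F5 S (hP1.sub (hs.par _)) ?_ ?_
  · rw [del_sub, h1, par_del, hs1, par_zero, sub_self]
  · rw [act_sub _ _ _ hP1.1 (hs.par S.pd).1]
    funext a
    rw [Pi.sub_apply, ev_par S.pd S.pd_mul S.ε S.ε_succ hs.1, hs2, asym_map]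
    simp only [hu2]
    rw [congrFun (asym_of_sk _ (act_sk _ _ hP1.2)) a]
    simp

theorem ker_conv [Finite E] {P : (Fin k → Fin l × ℕ) → V} {Q : (Fin (k + 1) → Fin l × ℕ) → V} (hQ : Ar Q)
    (h : del S P = par S.pd Q) (hR : ∃ R, Ar R ∧ Exa S k (P - par S.pd R)) : act S.ε Q = 0 := by
  obtain ⟨R, hR, hE⟩ := hR
  have h0 : del S (P - par S.pd R) = 0 := by
    cases k with
    | zero =>
      have : P - par S.pd R = 0 := hE
      rw [this, del_zero]
    | succ k =>
      obtain ⟨q, hq, e⟩ := hE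
      rw [e, del_del S hq]
  rw [del_sub, par_del, h, sub_eq_zero] at h0
  rw [uniq_lem S hQ (hR.del S) h0, ev_del S hR]

theorem surj_lem [Algebra ℚ V] [Finite E] (g : (Fin (k + 1) → E) → V) (hg : Sk g) (h0 : ∀ a, S.pd (g a) = 0) :
    ∃ (P : (Fin k → Fin l × ℕ) → V) (Q : (Fin (k + 1) → Fin l × ℕ) → V), Ar P ∧ Ar Q ∧
      del S P = par S.pd Q ∧ act S.ε Q = g := by
  obtain ⟨Q, hQ, hQ1, hQ2⟩ := F7 S g hg (fun t a => F8 S _ (h0 a) t)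
  obtain ⟨P, hP, e⟩ := F5 S (hQ.par S.pd) (by rw [par_del, hQ1, par_zero]) (by
    funext a
    rw [ev_par S.pd S.pd_mul S.ε S.ε_succ hQ.1, hQ2, h0]; rfl)
  exact ⟨P, Q, hP, hQ, e.symm, hQ2⟩

end

theorem sk_strict {V : Type*} [AddCommGroup V] [Module ℚ V] {k r : ℕ} (g : (Fin k → Fin r) → V) (hg : Sk g)
    (h : ∀ b : Fin k ↪o Fin r, g b = 0) : g = 0 := by
  funext a
  by_cases hi : Injective a
  · have hm : StrictMono (a ∘ Tuple.sort a) :=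
      (Tuple.monotone_sort a).strictMono_of_injective (hi.comp (Tuple.sort a).injective)
    have := h (OrderEmbedding.ofStrictMono _ hm)
    rw [OrderEmbedding.coe_ofStrictMono, hg] at this
    have h2 := congrArg (fun v => (Perm.sign (Tuple.sort a) : ℤ) • v) this
    simp only [smul_smul, sign_sq, one_smul, smul_zero] at h2
    exact h2
  · simp only [Injective, not_forall] at hi
    obtain ⟨x, y, hxy, hne⟩ := hi
    exact sk_eq_zero_of_eq g hg a x y hne hxy

theorem sk_ext {V : Type*} [AddCommGroup V] [Module ℚ V] {k r : ℕ} (c : (Fin k ↪o Fin r) → V) (p : V →+ V)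
    (hp : ∀ b, p (c b) = 0) :
    ∃ g : (Fin k → Fin r) → V, Sk g ∧ (∀ b : Fin k ↪o Fin r, g b = c b) ∧ ∀ a, p (g a) = 0 := by
  classical
  let c' : (Fin k → Fin r) → V := fun a => if h : StrictMono a then ((k.factorial : ℚ)) • c (OrderEmbedding.ofStrictMono a h) else 0
  refine ⟨asym c', asym_sk c', fun b => ?_, fun a => ?_⟩
  · unfold asym
    rw [Finset.sum_eq_single 1]
    · have : c' (⇑b ∘ ⇑(1 : Perm (Fin k))) = (k.factorial : ℚ) • c b := by
        have hb : StrictMono (⇑b ∘ ⇑(1 : Perm (Fin k))) := by simpa using b.strictMono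
        simp only [c']
        rw [dif_pos hb]
        congr 2
      rw [this]
      simp only [Perm.sign_one, Units.val_one, one_smul]
      rw [smul_smul, inv_mul_cancel₀, one_smul]
      exact_mod_cast Nat.factorial_ne_zero k
    · intro σ _ hσ
      have : ¬ StrictMono (⇑b ∘ ⇑σ) := by
        intro hm
        refine hσ ?_
        have hm' : StrictMono σ := fun x y hxy => b.lt_iff_lt.1 (hm hxy)
        have := Subsingleton.elim (hm'.orderIsoOfSurjective σ σ.surjective) (OrderIso.refl (Fin k))
        ext x
        exact congrArg Fin.val (congrArg (fun (f : Fin k ≃o Fin k) => f x) this)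
      simp only [c']
      rw [dif_neg this, smul_zero]
    · simp
  · rw [asym_map]
    refine asym_eq_zero _ _ fun σ => ?_
    simp only [c']
    split_ifs
    · rw [map_rat_smul p, hp, smul_zero]
    · exact map_zero p

theorem card_emb (k r : ℕ) : Nat.card (Fin k ↪o Fin r) = r.choose k := by
  rw [Nat.card_congr Set.powersetCard.ofFinEmbEquiv, Set.powersetCard.card, Nat.card_eq_fintype_card, Fintype.card_fin]

theorem rank_lem {R M ι : Type*} [CommRing R] [Nontrivial R] [AddCommGroup M] [Module R M] [Finite ι]
    (Z B : Submodule R M) (rel : M → (ι → R) → Prop)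
    (total : ∀ P ∈ Z, ∃ g, rel P g) (uniq : ∀ P ∈ Z, ∀ g g', rel P g → rel P g' → g = g')
    (add : ∀ P P' g g', rel P g → rel P' g' → rel (P + P') (g + g'))
    (smul : ∀ (c : R) P g, rel P g → rel (c • P) (c • g))
    (surj : ∀ g, ∃ P ∈ Z, rel P g) (ker : ∀ P ∈ Z, rel P 0 ↔ P ∈ B) :
    Module.rank R (Z ⧸ Submodule.comap Z.subtype B) = (Nat.card ι : Cardinal) := by
  choose! f hf using total
  let F : Z →ₗ[R] (ι → R) :=
    { toFun := fun P => f P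
      map_add' := fun P P' => uniq _ (P + P').2 _ _ (hf _ (P + P').2) (add _ _ _ _ (hf _ P.2) (hf _ P'.2))
      map_smul' := fun c P => uniq _ (c • P).2 _ _ (hf _ (c • P).2) (smul _ _ _ (hf _ P.2)) }
  have hF : ∀ P : Z, F P = f P := fun _ => rfl
  have hs : Surjective F := by
    intro g
    obtain ⟨P, hP, h⟩ := surj g
    exact ⟨⟨P, hP⟩, uniq P hP _ _ (hf P hP) h⟩
  have hk : LinearMap.ker F = Submodule.comap Z.subtype B := by
    ext P
    rw [LinearMap.mem_ker, Submodule.mem_comap, Submodule.subtype_apply, ← ker P P.2, hF]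
    constructor
    · intro h; rw [← h]; exact hf P P.2
    · intro h; exact uniq P P.2 _ _ (hf P P.2) h
  rw [← hk]
  have := Fintype.ofFinite ι
  have h := (F.quotKerEquivOfSurjective hs).lift_rank_eq
  rw [rank_fun', Cardinal.lift_natCast, Cardinal.lift_eq_nat_iff] at h
  rw [h, Nat.card_eq_fintype_card]

end S19


namespace S19

open Function Equiv

section
variable {V : Type*} [CommRing V] {l : ℕ}

/-- coefficient as a homomorphism -/
noncomputable def cH {k : ℕ} (d : Fin k →₀ ℕ) : MvPolynomial (Fin k) V →+ V :=
  AddMonoidHom.mk' (MvPolynomial.coeff d) (MvPolynomial.coeff_add d)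

theorem coeff_zs {k : ℕ} (d : Fin k →₀ ℕ) (n : ℤ) (p : MvPolynomial (Fin k) V) :
    MvPolynomial.coeff d (n • p) = n • MvPolynomial.coeff d p := map_zsmul (cH d) n p

theorem end_mul_apply {M : Type*} [AddCommMonoid M] (f g : AddMonoid.End M) (x : M) : (f * g) x = f (g x) := rfl

theorem sh_pow (r : ℕ) (SH : AddMonoid.End (Fin l × ℕ → V)) (hSH : ∀ g, SH g = sh g) (g : Fin l × ℕ → V) (i : Fin l) (q : ℕ) :
    (SH ^ r) g (i, q) = if r ≤ q then g (i, q - r) else 0 := by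
  induction r generalizing q with
  | zero => simp
  | succ r ih =>
    rw [pow_succ', end_mul_apply, hSH]
    cases q with
    | zero => simp [sh]
    | succ q => simp [sh, ih]

theorem wf_formula (pd : V →+ V) (N : ℕ) (K : Fin l → Fin l → ℕ → V) (n : ℕ) (j i : Fin l) (q : ℕ) :
    wf pd N K n j (i, q) = ∑ m ∈ Finset.range (N + 1), ∑ p ∈ Finset.range (n + 1),
      if n - p + m = q then (n.choose p : V) * pd^[p] (K j i m) else 0 := by
  let SH : AddMonoid.End (Fin l × ℕ → V) := AddMonoidHom.mk' sh (fun f g => by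
    funext x; exact sh_add f g x)
  let PD : AddMonoid.End (Fin l × ℕ → V) := AddMonoidHom.mk' (fun g x => pd (g x)) (fun f g => by
    funext x; simp)
  have hSH : ∀ g, SH g = sh g := fun _ => rfl
  have hPD : ∀ g x, PD g x = pd (g x) := fun _ _ => rfl
  have hcomm : Commute PD SH := by
    refine AddMonoidHom.ext fun g => ?_
    funext x
    change pd (sh g x) = sh (fun x => pd (g x)) x
    exact (sh_map pd (map_zero pd) g x).symm
  have h1 : wf pd N K n j = ((PD + SH) ^ n) (wf pd N K 0 j) := by
    induction n with
    | zero => simp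
    | succ n ih =>
      rw [pow_succ', end_mul_apply, ← ih]
      rfl
  have hPDp : ∀ p g x, (PD ^ p) g x = pd^[p] (g x) := by
    intro p
    induction p with
    | zero => intro g x; simp
    | succ p ih => intro g x; rw [pow_succ', end_mul_apply, hPD, ih, iterate_succ_apply']
  have hit0 : ∀ p, pd^[p] 0 = 0 := fun p => by
    induction p with
    | zero => rfl
    | succ p ih => rw [iterate_succ_apply', ih, map_zero]
  have hev : ∀ (s : Finset ℕ) (F : ℕ → AddMonoid.End (Fin l × ℕ → V)) g x, (∑ a ∈ s, F a) g x = ∑ a ∈ s, F a g x := by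
    intro s F g x
    classical
    induction s using Finset.induction_on with
    | empty => simp
    | insert a s ha ih => 
      rw [Finset.sum_insert ha, Finset.sum_insert ha, ← ih]; rfl
  rw [h1, hcomm.add_pow, hev, Finset.sum_comm]
  refine Finset.sum_congr rfl fun p _ => ?_
  rw [(Nat.cast_commute (n.choose p) _).symm.eq, ← nsmul_eq_mul]
  have : (n.choose p • (PD ^ p * SH ^ (n - p))) (wf pd N K 0 j) (i, q) = n.choose p • ((PD ^ p * SH ^ (n - p)) (wf pd N K 0 j) (i, q)) := rfl
  rw [this, end_mul_apply, hPDp, sh_pow _ SH hSH, nsmul_eq_mul]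
  by_cases h : n - p ≤ q
  · rw [if_pos h]
    by_cases h2 : q - (n - p) ≤ N
    · rw [Finset.sum_eq_single (q - (n - p))]
      · rw [if_pos (by omega)]
        simp only [wf]
        rw [if_pos h2]
      · intro m _ hm
        rw [if_neg (by omega)]
      · intro hm
        simp only [Finset.mem_range] at hm
        omega
    · rw [Finset.sum_eq_zero]
      · simp only [wf]
        rw [if_neg h2, hit0, mul_zero]
      · intro m hm
        simp only [Finset.mem_range] at hm
        rw [if_neg (by omega)]
  · rw [if_neg h, hit0, mul_zero, Finset.sum_eq_zero]
    intro m hm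
    rw [if_neg (by omega)]

/-- exponents -/
noncomputable def mon {k : ℕ} (x : Fin k → Fin l × ℕ) : Fin k →₀ ℕ := Finsupp.equivFunOnFinite.symm (fun a => (x a).2)

/-- coefficient array -/
noncomputable def hat {k : ℕ} (P : (Fin k → Fin l) → MvPolynomial (Fin k) V) (x : Fin k → Fin l × ℕ) : V :=
  MvPolynomial.coeff (mon x) (P (fun a => (x a).1))

variable {k : ℕ}

theorem mon_apply (x : Fin k → Fin l × ℕ) (a) : mon x a = (x a).2 := rfl

theorem mon_mk (i : Fin k → Fin l) (d : Fin k →₀ ℕ) : mon (fun a => (i a, d a)) = d := by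
  ext a; rfl

theorem hat_mk (P : (Fin k → Fin l) → MvPolynomial (Fin k) V) (i : Fin k → Fin l) (d : Fin k →₀ ℕ) :
    hat P (fun a => (i a, d a)) = MvPolynomial.coeff d (P i) := by
  rw [hat, mon_mk]

theorem hat_inj {P R : (Fin k → Fin l) → MvPolynomial (Fin k) V} (h : hat P = hat R) : P = R := by
  funext i
  ext d
  rw [← hat_mk, ← hat_mk, h]

theorem hat_fin (P : (Fin k → Fin l) → MvPolynomial (Fin k) V) : (support (hat P)).Finite := by
  refine (Set.finite_iUnion (fun i => ((P i).support.finite_toSet.image (fun d a => (i a, d a))))).subset fun x hx => ?_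
  simp only [Set.mem_iUnion]
  exact ⟨fun a => (x a).1, mon x, MvPolynomial.mem_support_iff.2 hx, rfl⟩

theorem mon_ext {x y : Fin k → Fin l × ℕ} (h1 : (fun a => (x a).1) = fun a => (y a).1) (h2 : mon x = mon y) : x = y := by
  funext a
  exact Prod.ext (congrFun h1 a) (DFunLike.congr_fun h2 a)

theorem hat_surj (f : (Fin k → Fin l × ℕ) → V) (hf : (support f).Finite) : ∃ P, hat P = f := by
  classical
  refine ⟨fun i => ∑ x ∈ hf.toFinset, if (fun a => (x a).1) = i then MvPolynomial.monomial (mon x) (f x) else 0, ?_⟩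
  funext y
  simp only [hat, MvPolynomial.coeff_sum]
  rw [Finset.sum_eq_single y]
  · simp
  · intro x _ hx
    split_ifs with h
    · rw [MvPolynomial.coeff_monomial, if_neg]
      intro h2
      exact hx (mon_ext h h2)
    · simp
  · intro hy
    simp only [Set.Finite.mem_toFinset, mem_support, not_not] at hy
    simp [hy]

theorem hat_add (P R : (Fin k → Fin l) → MvPolynomial (Fin k) V) : hat (P + R) = hat P + hat R := by
  funext x; simp [hat]

theorem hat_smul (Cs : Subring V) (c : Cs) (P : (Fin k → Fin l) → MvPolynomial (Fin k) V) :
    hat (c • P) = fun x => (c : V) * hat P x := by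
  funext x
  simp only [hat, Pi.smul_apply, MvPolynomial.coeff_smul]
  rfl

theorem mon_perm (σ : Perm (Fin k)) (x : Fin k → Fin l × ℕ) : Finsupp.mapDomain σ (mon (x ∘ σ)) = mon x := by
  ext a
  obtain ⟨b, rfl⟩ := σ.surjective a
  rw [Finsupp.mapDomain_apply σ.injective]
  rfl

theorem skew_iff (P : (Fin k → Fin l) → MvPolynomial (Fin k) V) : OmegaSkew P ↔ Sk (hat P) := by
  have key : ∀ (σ : Perm (Fin k)) (x : Fin k → Fin l × ℕ),
      MvPolynomial.coeff (mon x) (MvPolynomial.rename σ (P (fun a => (x (σ a)).1))) = hat P (x ∘ σ) := by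
    intro σ x
    rw [← mon_perm σ x, MvPolynomial.coeff_rename_mapDomain _ σ.injective]
    rfl
  constructor
  · intro h σ x
    rw [← key, h σ (fun a => (x a).1)]
    exact coeff_zs _ _ _
  · intro h σ i
    ext d
    have h1 := h σ (fun a => (i a, d a))
    rw [← key, mon_mk, hat_mk] at h1
    rw [h1]
    exact (coeff_zs _ _ _).symm

theorem ar_hat {P : (Fin k → Fin l) → MvPolynomial (Fin k) V} (h : OmegaSkew P) : Ar (hat P) :=
  ⟨hat_fin P, (skew_iff P).1 h⟩

theorem exists_hat {f : (Fin k → Fin l × ℕ) → V} (hf : Ar f) : ∃ P, OmegaSkew P ∧ hat P = f := by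
  obtain ⟨P, rfl⟩ := hat_surj f hf.1
  exact ⟨P, (skew_iff P).2 hf.2, rfl⟩

theorem coeff_coeffMap (f : V → V) (h0 : f 0 = 0) (Q : MvPolynomial (Fin k) V) (d) :
    MvPolynomial.coeff d (coeffMap f Q) = f (MvPolynomial.coeff d Q) := by
  classical
  unfold coeffMap
  simp only [MvPolynomial.coeff_sum, MvPolynomial.coeff_monomial]
  rw [Finset.sum_ite_eq']
  split_ifs with h
  · rfl
  · rw [MvPolynomial.notMem_support_iff.1 h, h0]

theorem hat_bigD (pd : V →+ V) (P : (Fin k → Fin l) → MvPolynomial (Fin k) V) : hat (bigD pd P) = par pd (hat P) := by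
  classical
  funext x
  simp only [par]
  conv_lhs => rw [hat]
  simp only [bigD, MvPolynomial.coeff_add, coeff_coeffMap _ (map_zero pd), Finset.sum_mul, MvPolynomial.coeff_sum]
  rw [add_comm]
  congr 1
  refine Finset.sum_congr rfl fun a _ => ?_
  rw [MvPolynomial.coeff_X_mul']
  rcases hx : x a with ⟨i, m⟩
  cases m with
  | zero =>
    rw [if_neg]
    · rfl
    · rw [Finsupp.mem_support_iff, mon_apply, hx]; simp
  | succ m =>
    rw [if_pos (by rw [Finsupp.mem_support_iff, mon_apply, hx]; simp)]
    simp only [sh, hat]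
    congr 1
    · ext b
      rw [Finsupp.tsub_apply, mon_apply, mon_apply]
      by_cases hb : b = a
      · subst hb; simp [hx]
      · simp [update_of_ne hb, Finsupp.single_apply, Ne.symm hb]
    · congr 1
      funext b
      by_cases hb : b = a
      · subst hb; simp [hx]
      · simp [update_of_ne hb]

theorem coeff_kf (pd : V →+ V) (f : V → V) (f0 : f 0 = 0) (N : ℕ) (K : Fin l → Fin l → ℕ → V)
    (n : ℕ) (j : Fin l) (α : Fin (k + 1))
    (P : (Fin k → Fin l) → MvPolynomial (Fin k) V) (x : Fin (k + 1) → Fin l × ℕ) :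
    MvPolynomial.coeff (mon x) (coeffMap f (MvPolynomial.rename α.succAbove (P (fun b => (x (α.succAbove b)).1)))
        * kFactor pd N K n j (x α).1 α) =
      f (hat P (fun b => x (α.succAbove b))) * wf pd N K n j (x α) := by
  classical
  have hinj : Injective α.succAbove := Fin.succAbove_right_injective
  have key : ∀ q v, MvPolynomial.coeff (mon x) (coeffMap f (MvPolynomial.rename α.succAbove (P (fun b => (x (α.succAbove b)).1)))
      * MvPolynomial.monomial (Finsupp.single α q) v) = if q = (x α).2 then f (hat P (fun b => x (α.succAbove b))) * v else 0 := by
    intro q v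
    rw [MvPolynomial.coeff_mul_monomial']
    by_cases hq : q = (x α).2
    · subst hq
      rw [if_pos (by
        rw [Finsupp.single_le_iff, mon_apply]), if_pos rfl, coeff_coeffMap f f0]
      have : mon x - Finsupp.single α (x α).2 = Finsupp.mapDomain α.succAbove (mon (fun b => x (α.succAbove b))) := by
        ext b
        rcases Fin.eq_self_or_eq_succAbove α b with rfl | ⟨b, rfl⟩
        · rw [Finsupp.mapDomain_of_notMem_range]
          · simp [mon_apply]
          · simp
        · rw [Finsupp.mapDomain_apply hinj]
          simp [mon_apply, Finsupp.single_apply, (Fin.succAbove_ne α b).symm]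
      rw [this, MvPolynomial.coeff_rename_mapDomain _ hinj]
      rfl
    · rw [if_neg hq]
      split_ifs with hle
      · rw [coeff_coeffMap f f0, MvPolynomial.coeff_rename_eq_zero, f0, zero_mul]
        intro u hu
        have h1 := DFunLike.congr_fun hu α
        rw [Finsupp.mapDomain_of_notMem_range _ _ (by simp)] at h1
        rw [Finsupp.single_le_iff, mon_apply] at hle
        simp only [Finsupp.tsub_apply, Finsupp.single_eq_same, mon_apply] at h1
        omega
      · rfl
  unfold kFactor
  simp only [Finset.mul_sum, MvPolynomial.coeff_sum, key]
  have := wf_formula pd N K n j (x α).1 (x α).2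
  rw [show x α = ((x α).1, (x α).2) from rfl] at *
  rw [this]
  simp only [Finset.mul_sum, mul_ite, mul_zero]

end
end S19


namespace S19

open Function Equiv

section
variable {V : Type*} [CommRing V] {l : ℕ} {E : Type} [DecidableEq E] (S : Sys V l E) {k : ℕ}

theorem coeffMap_zero (f : V → V) (Q : MvPolynomial (Fin k) V) (h : ∀ m ∈ Q.support, f (MvPolynomial.coeff m Q) = 0) :
    coeffMap f Q = 0 := by
  unfold coeffMap
  refine Finset.sum_eq_zero fun m hm => ?_
  rw [h m hm, map_zero]

theorem ar_smul (c : V) {Q : (Fin k → Fin l × ℕ) → V} (hQ : Ar Q) : Ar (fun x => c * Q x) := by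
  refine ⟨hQ.1.subset fun x hx h => hx ?_, fun σ x => ?_⟩
  · simp only
    rw [h, mul_zero]
  · simp only
    rw [hQ.2 σ x, mul_smul_comm]

theorem par_smul (c : V) (hc : S.pd c = 0) (Q : (Fin k → Fin l × ℕ) → V) :
    par S.pd (fun x => c * Q x) = fun x => c * par S.pd Q x := by
  funext x
  simp only [par, S.pd_mul, hc, zero_mul, zero_add, mul_add, Finset.mul_sum]
  congr 1
  refine Finset.sum_congr rfl fun a _ => ?_
  exact sh_map (fun v => c * v) (mul_zero c) _ _

theorem del_smul (c : V) (hc : S.pd c = 0) (Q : (Fin k → Fin l × ℕ) → V) :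
    del S (fun x => c * Q x) = fun x => c * del S Q x := by
  have hdv : ∀ f y, dv S (c * f) y = c * dv S f y := by
    intro f y
    unfold dv
    obtain ⟨T, hT⟩ := S.D_fin f
    rw [mul_finsum']
    · refine finsum_congr fun t => ?_
      rw [S.D_mul, F8 S c hc, zero_mul, zero_add, mul_assoc]
    · refine (Finset.range T).finite_toSet.subset fun t ht => ?_
      simp only [Finset.coe_range, Set.mem_Iio]
      by_contra h
      exact ht (by simp only; rw [hT t (by omega), zero_mul])
  funext x
  simp only [del, exd, hdv, Finset.mul_sum, mul_smul_comm]

theorem hat_deltaK (D : Fin l → ℕ → V → V) (N : ℕ) (K : Fin l → Fin l → ℕ → V)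
    (hSD : ∀ t f, S.D t f = D (dme l S.hl t).2 (dme l S.hl t).1 f)
    (hφ : ∀ t, S.φ (Sum.inl t) = wl S.pd N K S.hl t)
    (h0 : ∀ j n, D j n 0 = 0)
    (hfin : ∀ f : V, {p : Fin l × ℕ | D p.1 p.2 f ≠ 0}.Finite)
    (P : (Fin k → Fin l) → MvPolynomial (Fin k) V) :
    hat (deltaK S.pd D N K P) = del S (hat P) := by
  have hfin' : ∀ (j : Fin l) (f : V), {n : ℕ | D j n f ≠ 0}.Finite := by
    intro j f
    exact ((hfin f).preimage (f := fun n => (j, n)) (fun a _ b _ h => (Prod.ext_iff.1 h).2))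
  funext x
  conv_lhs => rw [hat]
  unfold deltaK del exd
  rw [MvPolynomial.coeff_sum]
  refine Finset.sum_congr rfl fun α _ => ?_
  rw [coeff_zs, comp_cyc]
  congr 1
  simp only [Fin.cons_zero, Fin.tail_cons]
  rw [MvPolynomial.coeff_sum]
  have h1 : ∀ j, MvPolynomial.coeff (mon x) (∑ᶠ n : ℕ,
      coeffMap (D j n) (MvPolynomial.rename α.succAbove (P (fun b => (x (α.succAbove b)).1)))
        * kFactor S.pd N K n j (x α).1 α) =
      ∑ᶠ n : ℕ, D j n (hat P (fun b => x (α.succAbove b))) * wf S.pd N K n j (x α) := by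
    intro j
    have := (cH (V := V) (mon x)).map_finsum (f := fun n : ℕ => coeffMap (D j n) (MvPolynomial.rename α.succAbove (P (fun b => (x (α.succAbove b)).1)))
        * kFactor S.pd N K n j (x α).1 α) (by
      refine (Set.Finite.biUnion (MvPolynomial.rename α.succAbove (P (fun b => (x (α.succAbove b)).1))).support.finite_toSet
        (fun m _ => hfin' j (MvPolynomial.coeff m (MvPolynomial.rename α.succAbove (P (fun b => (x (α.succAbove b)).1)))))).subset ?_
      intro n hn
      by_contra hc
      simp only [Set.mem_iUnion, not_exists, Set.mem_ofPred_eq, not_not] at hc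
      refine hn ?_
      simp only
      rw [coeffMap_zero _ _ (fun m hm => hc m hm), zero_mul])
    refine this.trans (finsum_congr fun n => ?_)
    exact coeff_kf S.pd (D j n) (h0 j n) N K n j α P x
  rw [Finset.sum_congr rfl fun j _ => h1 j]
  unfold dv
  generalize hat P (fun b => x (α.succAbove b)) = f
  have h2 : ∀ t, S.D t f * S.φ (Sum.inl t) (x α) = (fun p : ℕ × Fin l => D p.2 p.1 f * wf S.pd N K p.1 p.2 (x α)) (dme l S.hl t) := by
    intro t
    rw [hSD, hφ]; rfl
  rw [finsum_congr h2, finsum_comp_equiv (dme l S.hl) (f := fun p : ℕ × Fin l => D p.2 p.1 f * wf S.pd N K p.1 p.2 (x α)), ← finsum_comp_equiv (Equiv.prodComm (Fin l) ℕ), finsum_curry, finsum_eq_sum_of_fintype]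
  · rfl
  · refine (hfin f).subset fun p hp h => hp ?_
    simp only [Equiv.prodComm_apply, Prod.snd_swap, Prod.fst_swap]
    rw [h, zero_mul]

end

theorem main_rank {V : Type*} [CommRing V] [Nontrivial V] [Algebra ℚ V] {l r : ℕ} (S : Sys V l (Fin r)) {n : ℕ}
    (D : Fin l → ℕ → V → V) (N : ℕ) (K : Fin l → Fin l → ℕ → V)
    (Cs : Subring V) (hCs : ∀ x, x ∈ Cs ↔ S.pd x = 0)
    (hdel : ∀ {k : ℕ} (P : (Fin k → Fin l) → MvPolynomial (Fin k) V), hat (deltaK S.pd D N K P) = del S (hat P))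
    (Z B : Submodule Cs ((Fin n → Fin l) → MvPolynomial (Fin n) V))
    (hZ : ∀ P, P ∈ Z ↔ OmegaSkew P ∧
        ∃ Q : (Fin (n + 1) → Fin l) → MvPolynomial (Fin (n + 1)) V,
          OmegaSkew Q ∧ deltaK S.pd D N K P = bigD S.pd Q)
    (hB : ∀ P, OmegaSkew P → (P ∈ B ↔ ∃ R, Ar R ∧ Exa S n (hat P - par S.pd R))) :
    Module.rank Cs (↥Z ⧸ Submodule.comap Z.subtype B) = (r.choose (n + 1) : Cardinal) := by
  classical
  have hz : ∀ P, P ∈ Z ↔ OmegaSkew P ∧ ∃ Q : (Fin (n + 1) → Fin l × ℕ) → V, Ar Q ∧ del S (hat P) = par S.pd Q := by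
    intro P
    rw [hZ]
    refine and_congr_right fun _ => ?_
    constructor
    · rintro ⟨Q, hQ, h⟩
      exact ⟨hat Q, ar_hat hQ, by rw [← hdel, h, hat_bigD]⟩
    · rintro ⟨Q, hQ, h⟩
      obtain ⟨Q, hQ', rfl⟩ := exists_hat hQ
      exact ⟨Q, hQ', hat_inj (by rw [hdel, h, hat_bigD])⟩
  rw [← card_emb (n + 1) r]
  refine rank_lem Z B (fun P g => ∃ Q : (Fin (n + 1) → Fin l × ℕ) → V, Ar Q ∧ del S (hat P) = par S.pd Q ∧
    ∀ b : Fin (n + 1) ↪o Fin r, (g b : V) = act S.ε Q b) ?_ ?_ ?_ ?_ ?_ ?_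
  · intro P hP
    obtain ⟨hP, Q, hQ, h⟩ := (hz P).1 hP
    have := ev_const S (ar_hat hP) hQ h
    exact ⟨fun b => ⟨act S.ε Q b, (hCs _).2 (this.2 _)⟩, Q, hQ, h, fun b => rfl⟩
  · rintro P hP g g' ⟨Q, hQ, h, hg⟩ ⟨Q', hQ', h', hg'⟩
    have : Q = Q' := uniq_lem S hQ hQ' (h.symm.trans h')
    subst this
    funext b
    exact Subtype.ext ((hg b).trans (hg' b).symm)
  · rintro P P' g g' ⟨Q, hQ, h, hg⟩ ⟨Q', hQ', h', hg'⟩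
    refine ⟨Q + Q', hQ.add hQ', ?_, fun b => ?_⟩
    · rw [hat_add, del_add, h, h', par_add]
    · rw [act_add _ _ _ hQ.1 hQ'.1]
      simp [hg, hg']
  · rintro c P g ⟨Q, hQ, h, hg⟩
    have hc : S.pd c = 0 := (hCs _).1 c.2
    refine ⟨fun x => (c : V) * Q x, ?_, ?_, fun b => ?_⟩
    · exact ar_smul (c : V) hQ
    · rw [hat_smul, del_smul S c hc, h, par_smul S c hc]
    · rw [act_smul _ _ _ hQ.1]
      simp [hg]
  · intro g
    obtain ⟨g', hs, hg, h0⟩ := sk_ext (fun b => (g b : V)) S.pd (fun b => (hCs _).1 (g b).2)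
    obtain ⟨P, Q, hP, hQ, h, he⟩ := surj_lem S g' hs h0
    obtain ⟨P, hP', rfl⟩ := exists_hat hP
    exact ⟨P, (hz P).2 ⟨hP', Q, hQ, h⟩, Q, hQ, h, fun b => by rw [he, hg]⟩
  · intro P hP
    obtain ⟨hP, Q, hQ, h⟩ := (hz P).1 hP
    rw [hB P hP]
    constructor
    · rintro ⟨Q', hQ', h', hg'⟩
      have : act S.ε Q' = 0 := sk_strict _ (act_sk _ _ hQ'.2) (fun b => (hg' b).symm)
      exact ker_lem S (ar_hat hP) hQ' h' this
    · rintro ⟨R, hR, hE⟩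
      have : act S.ε Q = 0 := ker_conv S hQ h ⟨R, hR, hE⟩
      exact ⟨Q, hQ, h, fun b => by rw [this]; rfl⟩

end S19


namespace S19

open Function Equiv

theorem exists_sys {V : Type*} [CommRing V] [Nontrivial V]
    {l : ℕ} (hl : 0 < l) (pd : V → V) (D : Fin l → ℕ → V → V)
    (hV : IsAlgDiffFun pd D) (hnorm : IsNormalADF D)
    (hlc : ∀ (M : ℕ) (a : ℕ → V),
      (∀ (n : ℕ) (j : Fin l) (n' : ℕ), D j n' (a n) = 0) → a M ≠ 0 →
      (∀ b : V, (∀ (j : Fin l) (n' : ℕ), D j n' b = 0) →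
        ∃ u : V, (∀ (j : Fin l) (n' : ℕ), D j n' u = 0) ∧
          ∑ n ∈ Finset.range (M + 1), a n * pd^[n] u = b) ∧
      (1 ≤ M → ∃ u : V, u ≠ 0 ∧ (∀ (j : Fin l) (n' : ℕ), D j n' u = 0) ∧
          ∑ n ∈ Finset.range (M + 1), a n * pd^[n] u = 0))
    (N : ℕ) (Kc : Fin l → Fin l → ℕ → V)
    (hKquasi : ∀ (i j : Fin l) (m : ℕ) (j' : Fin l) (n : ℕ), D j' n (Kc i j m) = 0)
    (hKinv : IsUnit (Matrix.of fun i j : Fin l => Kc i j N)) :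
    ∃ S : Sys V l (Fin (N * l)), (∀ x, S.pd x = pd x) ∧
      (∀ t f, S.D t f = D (dme l S.hl t).2 (dme l S.hl t).1 f) ∧
      (∀ t, S.φ (Sum.inl t) = wl S.pd N Kc S.hl t) := by
  let pd' : V →+ V := AddMonoidHom.mk' pd hV.pd_add
  let dd : Fin l → ℕ → V →+ V := fun j n => AddMonoidHom.mk' (D j n) (hV.d_add j n)
  have hdd : ∀ j n x, dd j n x = D j n x := fun _ _ _ => rfl
  have hD0 : ∀ j n, D j n 0 = 0 := fun j n => map_zero (dd j n)
  have hD1 : ∀ j n, D j n 1 = 0 := fun j n => by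
    have := hV.d_leibniz j n 1 1
    simpa using this
  have hpd0 : pd 0 = 0 := map_zero pd'
  let Q : Subring V :=
    { carrier := {x | ∀ j n, D j n x = 0}
      mul_mem' := fun {a b} ha hb j n => by rw [hV.d_leibniz, ha j n, hb j n]; simp
      one_mem' := hD1
      add_mem' := fun {a b} ha hb j n => by rw [hV.d_add, ha j n, hb j n]; simp
      zero_mem' := hD0
      neg_mem' := fun {a} ha j n => by rw [← hdd, map_neg, hdd, ha j n, neg_zero] }
  have hQ : ∀ x ∈ Q, pd' x ∈ Q := by
    intro x hx j n
    change D j n (pd x) = 0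
    cases n with
    | zero => rw [hV.comm_zero, hx, hpd0]
    | succ n => rw [hV.comm_succ, hx, hx, hpd0, add_zero]
  have hlc' : ∀ (M : ℕ) (a : ℕ → V), (∀ n, a n ∈ Q) → a M ≠ 0 →
      (∀ b ∈ Q, ∃ u ∈ Q, ∑ n ∈ Finset.range (M + 1), a n * pd'^[n] u = b) ∧
      (1 ≤ M → ∃ u ∈ Q, u ≠ 0 ∧ ∑ n ∈ Finset.range (M + 1), a n * pd'^[n] u = 0) := by
    intro M a ha hM
    obtain ⟨h1, h2⟩ := hlc M a ha hM
    refine ⟨fun b hb => h1 b hb, fun hM => ?_⟩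
    obtain ⟨u, h3, h4, h5⟩ := h2 hM
    exact ⟨u, h4, h3, h5⟩
  obtain ⟨φ, ψ, ε, e1, e2, e3, e4, e5, e6, e7, e8⟩ := exists_basis pd' hV.pd_leibniz Q hQ hlc' hl N Kc
    (fun i j m => hKquasi i j m) hKinv
  have hlt : ∀ (t s : ℕ), t < s ↔ ((dme l hl t).1 < (dme l hl s).1 ∨ ((dme l hl t).1 = (dme l hl s).1 ∧ (dme l hl t).2 < (dme l hl s).2)) := by
    intro t s
    change _ ↔ (t / l < s / l ∨ (t / l = s / l ∧ t % l < s % l))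
    have h1 := Nat.div_add_mod t l
    have h2 := Nat.div_add_mod s l
    have h3 := Nat.mod_lt t hl
    have h4 := Nat.mod_lt s hl
    constructor
    · intro h
      rcases (Nat.div_le_div_right (c := l) h.le).lt_or_eq with h5 | h5
      · exact Or.inl h5
      · refine Or.inr ⟨h5, ?_⟩
        rw [h5] at h1
        omega
    · rintro (h | ⟨h, h'⟩)
      · exact Nat.lt_of_div_lt_div h
      · rw [h] at h1
        omega
  have hadd : ∀ t, dme l hl (t + l) = ((dme l hl t).1 + 1, (dme l hl t).2) := by
    intro t
    refine Prod.ext ?_ (Fin.ext ?_)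
    · exact Nat.add_div_right t hl
    · exact Nat.add_mod_right t l
  have hVm : ∀ t f, memVmi D (dme l hl t).1 (dme l hl t).2 f ↔ ∀ s, t < s → D (dme l hl s).2 (dme l hl s).1 f = 0 := by
    intro t f
    constructor
    · intro h s hs
      exact h _ _ ((hlt t s).1 hs)
    · intro h n j hnj
      have := h ((dme l hl).symm (n, j))
      rw [hlt, Equiv.apply_symm_apply] at this
      exact this hnj
  have hall : ∀ f, (∀ t, D (dme l hl t).2 (dme l hl t).1 f = 0) ↔ ∀ j n, D j n f = 0 := by
    intro f
    constructor
    · intro h j n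
      have := h ((dme l hl).symm (n, j))
      rwa [Equiv.apply_symm_apply] at this
    · intro h t
      exact h _ _
  let S : Sys V l (Fin (N * l)) :=
    { hl := hl
      pd := pd'
      D := fun t => dd (dme l hl t).2 (dme l hl t).1
      φ := φ
      ψ := ψ
      ε := ε
      pd_mul := hV.pd_leibniz
      D_mul := fun t => hV.d_leibniz _ _
      D_comm := fun s t f => hV.d_comm _ _ _ _ f
      D_norm := fun t f h => by
        obtain ⟨g, h1, h2⟩ := hnorm _ _ f ((hVm t f).2 h)
        exact ⟨g, (hVm t g).1 h1, h2⟩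
      D_fin := fun f => by
        have h1 : {t | D (dme l hl t).2 (dme l hl t).1 f ≠ 0}.Finite :=
          (hV.d_fin f).preimage (f := fun t => ((dme l hl t).2, (dme l hl t).1)) (fun a _ b _ h => by
            refine (dme l hl).injective (Prod.ext ?_ ?_)
            · exact (Prod.ext_iff.1 h).2
            · exact (Prod.ext_iff.1 h).1)
        obtain ⟨T, hT⟩ := h1.bddAbove
        refine ⟨T + 1, fun t ht => ?_⟩
        by_contra hc
        have : t ≤ T := hT hc
        omega
      D_pd := fun t f => by
        simp only [hadd]
        exact hV.comm_succ _ _ _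
      D_pd0 := fun t f h => by
        have : (dme l hl t).1 = 0 := Nat.div_eq_of_lt h
        rw [this]
        exact hV.comm_zero _ _
      φ_succ := fun t => by rw [e1, e1, wl_add]
      φ_fin := e2
      ψ_fin := e3
      φ_Q := fun t j x => e4 j x _ _
      ε_succ := e5
      φε := e6
      φψ := e7
      ψφ := e8
      pd_surj := fun q hq => by
        obtain ⟨u, h1, h2⟩ := (hlc 1 (fun n => if n = 1 then 1 else 0) (fun n j n' => by
          split_ifs
          · exact hD1 _ _
          · exact hD0 _ _) (by simp)).1 q ((hall q).1 hq)
        refine ⟨u, (hall u).2 h1, ?_⟩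
        change pd u = q
        simpa [Finset.sum_range_succ] using h2 }
  exact ⟨S, fun _ => rfl, fun _ _ => rfl, e1⟩

end S19

/-- Let `V` be a normal algebra of differential functions in `ℓ < ∞` differential
variables over a field of characteristic zero, whose algebra of quasiconstants `F` is a
linearly closed differential field with respect to the restriction of `∂`, with subfield
of constants `C = {c ∈ F : ∂c = 0}`, and let `K(∂)` be an `ℓ×ℓ` matrix differential
operator of order `N` with quasiconstant coefficients and invertible leading coefficient.
Then for every `k ≥ 0` the cohomology of the generalized variational complex
`(Ω^•(V), δ_K)`, where `Ω^k(V) = Ω̃^k(V)/∂Ω̃^k(V)`, satisfies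
`dim_C H^k(Ω^•(V), δ_K) = binom(Nℓ, k+1)`.  Here `H^k(Ω^•(V), δ_K)` is realized as the
subquotient `Z'_k / B'_k` of `Ω̃^k(V)`, where
`Z'_k = {P ∈ Ω̃^k : δ_K P ∈ ∂ Ω̃^{k+1}}` and `B'_k = δ_K(Ω̃^{k−1}) + ∂ Ω̃^k`. -/
theorem stmt_19 (V : Type*) [CommRing V] [Algebra ℚ V] [Nontrivial V]
    (l : ℕ) (hl : 0 < l) (pd : V → V) (D : Fin l → ℕ → V → V)
    (hV : IsAlgDiffFun pd D) (hnorm : IsNormalADF D)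
    (hlc : ∀ (M : ℕ) (a : ℕ → V),
      (∀ (n : ℕ) (j : Fin l) (n' : ℕ), D j n' (a n) = 0) → a M ≠ 0 →
      (∀ b : V, (∀ (j : Fin l) (n' : ℕ), D j n' b = 0) →
        ∃ u : V, (∀ (j : Fin l) (n' : ℕ), D j n' u = 0) ∧
          ∑ n ∈ Finset.range (M + 1), a n * pd^[n] u = b) ∧
      (1 ≤ M → ∃ u : V, u ≠ 0 ∧ (∀ (j : Fin l) (n' : ℕ), D j n' u = 0) ∧
          ∑ n ∈ Finset.range (M + 1), a n * pd^[n] u = 0))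
    (Cs : Subring V)
    (hCs : ∀ x : V, x ∈ Cs ↔ (∀ (j : Fin l) (n : ℕ), D j n x = 0) ∧ pd x = 0)
    (N : ℕ) (Kc : Fin l → Fin l → ℕ → V)
    (hKquasi : ∀ (i j : Fin l) (m : ℕ) (j' : Fin l) (n : ℕ), D j' n (Kc i j m) = 0)
    (hKinv : IsUnit (Matrix.of fun i j : Fin l => Kc i j N)) :
    (∀ (Z0 B0 : Submodule Cs ((Fin 0 → Fin l) → MvPolynomial (Fin 0) V)),
      (∀ P, P ∈ Z0 ↔ OmegaSkew P ∧
        ∃ Q : (Fin 1 → Fin l) → MvPolynomial (Fin 1) V,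
          OmegaSkew Q ∧ deltaK pd D N Kc P = bigD pd Q) →
      (∀ P, P ∈ B0 ↔ ∃ R : (Fin 0 → Fin l) → MvPolynomial (Fin 0) V,
          OmegaSkew R ∧ P = bigD pd R) →
      Module.rank Cs (↥Z0 ⧸ Submodule.comap Z0.subtype B0)
        = ((N * l).choose 1 : Cardinal)) ∧
    (∀ (k : ℕ)
        (Z B : Submodule Cs ((Fin (k + 1) → Fin l) → MvPolynomial (Fin (k + 1)) V)),
      (∀ P, P ∈ Z ↔ OmegaSkew P ∧
        ∃ Q : (Fin (k + 2) → Fin l) → MvPolynomial (Fin (k + 2)) V,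
          OmegaSkew Q ∧ deltaK pd D N Kc P = bigD pd Q) →
      (∀ P, P ∈ B ↔ ∃ (Q' : (Fin k → Fin l) → MvPolynomial (Fin k) V)
          (R : (Fin (k + 1) → Fin l) → MvPolynomial (Fin (k + 1)) V),
          OmegaSkew Q' ∧ OmegaSkew R ∧ P = deltaK pd D N Kc Q' + bigD pd R) →
      Module.rank Cs (↥Z ⧸ Submodule.comap Z.subtype B)
        = ((N * l).choose (k + 2) : Cardinal)) := by
  obtain ⟨S, hS1, hS2, hS3⟩ := S19.exists_sys hl pd D hV hnorm hlc N Kc hKquasi hKinv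
  obtain rfl : (S.pd : V → V) = pd := funext hS1
  have hD0 : ∀ j n, D j n 0 = 0 := fun j n => by
    have := hV.d_add j n 0 0
    simpa using this
  have hdel : ∀ {k : ℕ} (P : (Fin k → Fin l) → MvPolynomial (Fin k) V),
      S19.hat (deltaK S.pd D N Kc P) = S19.del S (S19.hat P) :=
    fun {k} P => S19.hat_deltaK S D N Kc hS2 hS3 hD0 hV.d_fin P
  have hCs' : ∀ x, x ∈ Cs ↔ S.pd x = 0 := by
    intro x
    rw [hCs]
    refine ⟨fun h => h.2, fun h => ⟨fun j n => ?_, h⟩⟩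
    have := S19.F8 S x h ((S19.dme l S.hl).symm (n, j))
    rwa [hS2, Equiv.apply_symm_apply] at this
  constructor
  · intro Z B hZ hB
    refine S19.main_rank S D N Kc Cs hCs' hdel Z B hZ fun P hP => ?_
    rw [hB]
    constructor
    · rintro ⟨R, hR, rfl⟩
      refine ⟨S19.hat R, S19.ar_hat hR, ?_⟩
      change _ = _
      rw [S19.hat_bigD, sub_self]
    · rintro ⟨R, hR, h⟩
      obtain ⟨R, hR', rfl⟩ := S19.exists_hat hR
      refine ⟨R, hR', S19.hat_inj ?_⟩
      rw [S19.hat_bigD]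
      exact sub_eq_zero.1 h
  · intro k Z B hZ hB
    refine S19.main_rank S D N Kc Cs hCs' hdel Z B hZ fun P hP => ?_
    rw [hB]
    constructor
    · rintro ⟨Q, R, hQ, hR, rfl⟩
      refine ⟨S19.hat R, S19.ar_hat hR, S19.hat Q, S19.ar_hat hQ, ?_⟩
      rw [S19.hat_add, S19.hat_bigD, hdel, add_sub_cancel_right]
    · rintro ⟨R, hR, q, hq, h⟩
      obtain ⟨R, hR', rfl⟩ := S19.exists_hat hR
      obtain ⟨q, hq', rfl⟩ := S19.exists_hat hq
      refine ⟨q, R, hq', hR', S19.hat_inj ?_⟩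
      rw [S19.hat_add, S19.hat_bigD, hdel, ← h, sub_add_cancel]
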